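/- arXiv:2110.10740 — 3 statements merged into one kernel-verified Lean document; each statement's English description precedes it below -/
import Mathlib

section
/- Let M = (X, I) be a matroid and let k be an integer with 1 ≤ k < rk(M). Then I(k)² ≥ (1 + 1/k)·(1 + 1/(p(k−1) − 1))·I(k−1)·I(k+1), where p(k−1) is the (k−1)-continuation number of M (note that p(k−1) ≥ 2 automatically holds since k < rk(M)). -/
open scoped Classical BigOperators

noncomputable section

variable {X : Type*} [Fintype X] [DecidableEq X]

/-- The number of independent sets of size `k` of the set system `Indep`. -/
def numIndep (Indep : Finset X → Prop) (k : ℕ) : ℕ :=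
  (Finset.univ.filter (fun S : Finset X => Indep S ∧ S.card = k)).card

/-- The rank of a matroid: the maximal size of an independent set. -/
def matroidRk (Indep : Finset X → Prop) : ℕ :=
  Finset.univ.sup (fun S : Finset X => if Indep S then S.card else 0)

/-- The set of continuations of an independent set `S`. -/
def mCont (Indep : Finset X → Prop) (S : Finset X) : Finset X :=
  Finset.univ.filter (fun x => x ∉ S ∧ Indep (insert x S))

/-- The parallel class of `x ∈ Cnt(S)`:  the set of continuations `y` with `y ∼_S x`,
i.e. `y = x` or `S ∪ {x,y}` is not independent. -/
def mParClass (Indep : Finset X → Prop) (S : Finset X) (x : X) : Finset X :=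
  (mCont Indep S).filter (fun y => y = x ∨ ¬ Indep (insert y (insert x S)))

/-- The set `Par(S)` of parallel classes of `S`. -/
def mParClasses (Indep : Finset X → Prop) (S : Finset X) : Finset (Finset X) :=
  (mCont Indep S).image (mParClass Indep S)

/-- The `k`-continuation number `p(k)`: the maximal number of parallel classes of an
independent set of size `k`. -/
def contNum (Indep : Finset X → Prop) (k : ℕ) : ℕ :=
  (Finset.univ.filter (fun S : Finset X => Indep S ∧ S.card = k)).sup
    (fun S => (mParClasses Indep S).card)


open Matrix in
theorem rlc_spec {V : Type*} [Fintype V] [DecidableEq V] (B : Matrix V V ℝ) (hB : ∀ x y, B x y = B y x)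
    (u : V → ℝ)
    (h : ∀ (l : ℝ) (w : V → ℝ), 0 < l → B *ᵥ w = l • w → w ⬝ᵥ u = 0) :
    u ⬝ᵥ (B *ᵥ u) ≤ 0 := by
  have hH : B.IsHermitian := by
    ext x y; simp [Matrix.conjTranspose_apply, hB x y]
  have hT : Bᵀ = B := by ext x y; simp [hB x y]
  have key := hH.eigenvectorBasis.sum_inner_mul_inner (WithLp.toLp 2 u) (WithLp.toLp 2 (B *ᵥ u))
  have e : u ⬝ᵥ (B *ᵥ u) = inner ℝ (WithLp.toLp 2 u : EuclideanSpace ℝ V) (WithLp.toLp 2 (B *ᵥ u)) := by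
    simp [EuclideanSpace.inner_eq_star_dotProduct, dotProduct_comm]
  rw [e, ← key]
  apply Finset.sum_nonpos
  intro i _
  have he := hH.mulVec_eigenvectorBasis i
  set w : V → ℝ := (hH.eigenvectorBasis i).ofLp with hw
  have e1 : inner ℝ (WithLp.toLp 2 u : EuclideanSpace ℝ V) (hH.eigenvectorBasis i) = w ⬝ᵥ u := by
    simp [EuclideanSpace.inner_eq_star_dotProduct, hw]
  have e2 : inner ℝ (hH.eigenvectorBasis i) (WithLp.toLp 2 (B *ᵥ u) : EuclideanSpace ℝ V)
      = hH.eigenvalues i * (w ⬝ᵥ u) := by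
    have : inner ℝ (hH.eigenvectorBasis i) (WithLp.toLp 2 (B *ᵥ u) : EuclideanSpace ℝ V) = w ⬝ᵥ (B *ᵥ u) := by
      simp [EuclideanSpace.inner_eq_star_dotProduct, hw, dotProduct_comm]
    rw [this, Matrix.dotProduct_mulVec, ← Matrix.mulVec_transpose, hT, he, smul_dotProduct, smul_eq_mul]
  rw [e1, e2]
  by_cases hl : 0 < hH.eigenvalues i
  · rw [h _ w hl he]; simp
  · have : hH.eigenvalues i ≤ 0 := not_lt.mp hl
    nlinarith [mul_self_nonneg (w ⬝ᵥ u)]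

/-- bilinear form -/
def rlcQ {V : Type*} [Fintype V] (Q : V → V → ℝ) (u v : V → ℝ) : ℝ := ∑ x, ∑ y, u x * Q x y * v y

/-- hyperbolicity -/
def rlcHyp {V : Type*} [Fintype V] (Q : V → V → ℝ) : Prop :=
  ∃ h : V → ℝ, ∀ v : V → ℝ, ∑ x, h x * v x = 0 → rlcQ Q v v ≤ 0

theorem rlcQ_symm {V : Type*} [Fintype V] (Q : V → V → ℝ) (hQ : ∀ x y, Q x y = Q y x) (u v : V → ℝ) :
    rlcQ Q u v = rlcQ Q v u := by
  unfold rlcQ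
  rw [Finset.sum_comm]
  refine Finset.sum_congr rfl fun x _ => Finset.sum_congr rfl fun y _ => ?_
  rw [hQ]; ring

theorem rlcQ_expand {V : Type*} [Fintype V] (Q : V → V → ℝ) (hQ : ∀ x y, Q x y = Q y x) (u v : V → ℝ) (s : ℝ) :
    rlcQ Q (fun x => v x - s * u x) (fun x => v x - s * u x)
      = rlcQ Q v v - 2 * s * rlcQ Q u v + s ^ 2 * rlcQ Q u u := by
  have h1 : rlcQ Q (fun x => v x - s * u x) (fun x => v x - s * u x)
      = rlcQ Q v v - s * rlcQ Q u v - s * rlcQ Q v u + s ^ 2 * rlcQ Q u u := by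
    unfold rlcQ
    simp only [Finset.mul_sum, ← Finset.sum_sub_distrib, ← Finset.sum_add_distrib]
    refine Finset.sum_congr rfl fun x _ => Finset.sum_congr rfl fun y _ => ?_
    ring
  rw [h1, rlcQ_symm Q hQ v u]; ring

theorem rlcHyp_cs {V : Type*} [Fintype V] (Q : V → V → ℝ) (hQ : ∀ x y, Q x y = Q y x)
    (hH : rlcHyp Q) (u v : V → ℝ) (hu : 0 < rlcQ Q u u) :
    rlcQ Q u u * rlcQ Q v v ≤ rlcQ Q u v ^ 2 := by
  obtain ⟨h, hh⟩ := hH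
  have hu0 : ∑ x, h x * u x ≠ 0 := fun h0 => absurd (hh u h0) (not_le.mpr hu)
  set s := (∑ x, h x * v x) / (∑ x, h x * u x) with hs
  have h0 : ∑ x, h x * (v x - s * u x) = 0 := by
    have : ∑ x, h x * (v x - s * u x) = ∑ x, h x * v x - s * ∑ x, h x * u x := by
      rw [Finset.mul_sum, ← Finset.sum_sub_distrib]
      exact Finset.sum_congr rfl fun x _ => by ring
    rw [this, hs, div_mul_cancel₀ _ hu0, sub_self]
  have := hh _ h0
  rw [rlcQ_expand Q hQ] at this
  nlinarith [sq_nonneg (rlcQ Q u v - s * rlcQ Q u u)]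

theorem rlc_step {V : Type*} [Fintype V] [DecidableEq V] (Q : V → V → ℝ) (hQ : ∀ x y, Q x y = Q y x)
    (hQ0 : ∀ x y, 0 ≤ Q x y) (t : V → ℝ) (ht : ∀ x, 0 < t x) (o : V)
    (ho : ∀ x, 0 < ∑ y, Q x y * t y → 0 < Q o x)
    (A : V → V → V → ℝ) (hA : ∀ z x y, A z x y = A z y x) (hA' : ∀ z x y, A z x y = A x z y)
    (hA0 : ∀ z x y, 0 ≤ A z x y)
    (hQA : ∀ x y, Q x y = ∑ z, t z * A z x y)
    (hAH : ∀ z, rlcHyp (A z)) : rlcHyp Q := by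
  set D : V → ℝ := fun x => ∑ y, Q x y * t y with hD
  have hD0 : ∀ x, 0 ≤ D x := fun x => Finset.sum_nonneg fun y _ => mul_nonneg (hQ0 x y) (ht y).le
  have hDz : ∀ x, D x = 0 → ∀ y, Q x y = 0 := by
    intro x hx y
    have := (Finset.sum_eq_zero_iff_of_nonneg (fun y _ => mul_nonneg (hQ0 x y) (ht y).le)).1 hx y (Finset.mem_univ y)
    exact (mul_eq_zero.1 this).resolve_right (ht y).ne'
  have hAz : ∀ x, D x = 0 → ∀ y z, A x y z = 0 := by
    intro x hx y z
    have h1 := hDz x hx z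
    rw [hQA] at h1
    have := (Finset.sum_eq_zero_iff_of_nonneg (fun y _ => mul_nonneg (ht y).le (hA0 y x z))).1 h1 y (Finset.mem_univ y)
    rw [hA']
    exact (mul_eq_zero.1 this).resolve_left (ht y).ne'
  have hrow : ∀ x v, rlcQ (A x) t v = ∑ y, Q x y * v y := by
    intro x v
    unfold rlcQ
    rw [Finset.sum_comm]
    refine Finset.sum_congr rfl fun y _ => ?_
    rw [hQA, Finset.sum_mul]
    refine Finset.sum_congr rfl fun z _ => ?_
    rw [hA' x z y]
  have hQv : ∀ v, rlcQ Q v v = ∑ x, t x * rlcQ (A x) v v := by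
    intro v
    unfold rlcQ
    simp only [Finset.mul_sum]
    rw [Finset.sum_comm' (t' := Finset.univ) (s' := fun _ => Finset.univ) (by simp)]
    rw [Finset.sum_comm (f := fun x i => ∑ j, t x * (v i * A x i j * v j))]
    rw [Finset.sum_comm]
    refine Finset.sum_congr rfl fun x _ => ?_
    rw [Finset.sum_comm]
    refine Finset.sum_congr rfl fun y _ => ?_
    rw [hQA, Finset.mul_sum, Finset.sum_mul]
    refine Finset.sum_congr rfl fun z _ => ?_
    ring
  set d : V → ℝ := fun x => D x / t x with hd
  have hd0 : ∀ x, 0 ≤ d x := fun x => div_nonneg (hD0 x) (ht x).le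
  have hdz : ∀ x, d x = 0 → D x = 0 := fun x hx => (div_eq_zero_iff.1 hx).resolve_right (ht x).ne'
  have main : ∀ v, rlcQ Q v v ≤ ∑ x, (∑ y, Q x y * v y) ^ 2 / d x := by
    intro v
    rw [hQv]
    refine Finset.sum_le_sum fun x _ => ?_
    by_cases hx : D x = 0
    · have : rlcQ (A x) v v = 0 := by simp [rlcQ, hAz x hx]
      rw [this, mul_zero]
      exact div_nonneg (sq_nonneg _) (hd0 x)
    · have hpos : 0 < D x := lt_of_le_of_ne (hD0 x) (Ne.symm hx)
      have h1 : rlcQ (A x) t t = D x := hrow x t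
      have := rlcHyp_cs (A x) (hA x) (hAH x) t v (by rw [h1]; exact hpos)
      rw [h1, hrow] at this
      have hdx : 0 < d x := div_pos hpos (ht x)
      rw [le_div_iff₀ hdx]
      calc t x * rlcQ (A x) v v * d x = D x * rlcQ (A x) v v := by
            simp only [hd]; have := (ht x).ne'; field_simp
        _ ≤ _ := this
  have dir : ∀ v, ∑ x, d x * v x ^ 2 - rlcQ Q v v
      = (1/2) * ∑ x, ∑ y, Q x y * (t x * t y) * (v x / t x - v y / t y) ^ 2 := by
    intro v
    have e1 : ∑ x, d x * v x ^ 2 = ∑ x, ∑ y, Q x y * t y * (v x ^ 2 / t x) := by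
      refine Finset.sum_congr rfl fun x _ => ?_
      rw [← Finset.sum_mul]; simp only [hd, hD]; ring
    have e2 : ∑ x, d x * v x ^ 2 = ∑ x, ∑ y, Q x y * t x * (v y ^ 2 / t y) := by
      rw [e1, Finset.sum_comm]
      refine Finset.sum_congr rfl fun x _ => Finset.sum_congr rfl fun y _ => ?_
      rw [hQ]
    have e3 : ∑ x, d x * v x ^ 2 = (1/2) * (∑ x, ∑ y, Q x y * t y * (v x ^ 2 / t x)) + (1/2) * (∑ x, ∑ y, Q x y * t x * (v y ^ 2 / t y)) := by
      rw [← e1, ← e2]; ring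
    rw [e3]
    unfold rlcQ
    simp only [Finset.mul_sum, ← Finset.sum_sub_distrib, ← Finset.sum_add_distrib]
    refine Finset.sum_congr rfl fun x _ => Finset.sum_congr rfl fun y _ => ?_
    have := (ht x).ne'
    have := (ht y).ne'
    field_simp
    ring
  refine ⟨D, fun v hv => ?_⟩
  set s : V → ℝ := fun x => Real.sqrt (d x) with hs
  have hss : ∀ x, s x * s x = d x := fun x => Real.mul_self_sqrt (hd0 x)
  have hsz : ∀ x, s x = 0 → D x = 0 := fun x hx => hdz x (by rw [← hss, hx, zero_mul])
  set B : Matrix V V ℝ := fun x y => (s x)⁻¹ * Q x y * (s y)⁻¹ with hBdef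
  have hB : ∀ x y, B x y = B y x := by intro x y; simp only [hBdef]; rw [hQ]; ring
  have hQB : ∀ x y, Q x y = s x * B x y * s y := by
    intro x y
    by_cases hx : s x = 0
    · rw [hDz x (hsz x hx), hx]; ring
    by_cases hy : s y = 0
    · rw [hQ, hDz y (hsz y hy), hy]; ring
    simp only [hBdef]; field_simp
  have hfin := rlc_spec B hB (fun x => s x * v x) ?_
  · have : rlcQ Q v v = (fun x => s x * v x) ⬝ᵥ (B.mulVec (fun x => s x * v x)) := by
      unfold rlcQ
      simp only [dotProduct, Matrix.mulVec, Finset.mul_sum]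
      refine Finset.sum_congr rfl fun x _ => Finset.sum_congr rfl fun y _ => ?_
      rw [hQB]; ring
    rw [this]; exact hfin
  intro l w hl hw
  have hwx : ∀ x, ∑ y, B x y * w y = l * w x := by
    intro x
    have := congrFun hw x
    simpa [Matrix.mulVec, dotProduct] using this
  have hwz : ∀ x, s x = 0 → w x = 0 := by
    intro x hx
    have := hwx x
    have h0 : ∑ y, B x y * w y = 0 := by
      apply Finset.sum_eq_zero; intro y _; simp [hBdef, hx]
    rw [h0] at this
    exact (mul_eq_zero.1 this.symm).resolve_left hl.ne'
  set v' : V → ℝ := fun x => (s x)⁻¹ * w x with hv'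
  have hwv : ∀ x, w x = s x * v' x := by
    intro x
    by_cases hx : s x = 0
    · rw [hwz x hx, hx, zero_mul]
    · simp only [hv']; field_simp
  have q1 : rlcQ Q v' v' = l * ∑ x, w x ^ 2 := by
    unfold rlcQ
    rw [Finset.mul_sum]
    refine Finset.sum_congr rfl fun x _ => ?_
    calc ∑ y, v' x * Q x y * v' y = w x * ∑ y, B x y * w y := by
          rw [Finset.mul_sum]
          refine Finset.sum_congr rfl fun y _ => ?_
          rw [hQB, hwv x, hwv y]; ring
      _ = _ := by rw [hwx]; ring
  have q2 : ∑ x, (∑ y, Q x y * v' y) ^ 2 / d x = l ^ 2 * ∑ x, w x ^ 2 := by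
    rw [Finset.mul_sum]
    refine Finset.sum_congr rfl fun x _ => ?_
    have : ∑ y, Q x y * v' y = s x * (l * w x) := by
      rw [← hwx, Finset.mul_sum]
      refine Finset.sum_congr rfl fun y _ => ?_
      rw [hQB, hwv y]; ring
    rw [this, ← hss]
    by_cases hx : s x = 0
    · rw [hwz x hx, hx]; simp
    · field_simp
  have q3 : ∑ x, d x * v' x ^ 2 = ∑ x, w x ^ 2 := by
    refine Finset.sum_congr rfl fun x _ => ?_
    rw [hwv, ← hss]; ring
  have m1 := main v'
  rw [q1, q2] at m1
  have d1 := dir v'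
  rw [q1, q3] at d1
  have hnn : ∀ x y, 0 ≤ Q x y * (t x * t y) * (v' x / t x - v' y / t y) ^ 2 := fun x y =>
    mul_nonneg (mul_nonneg (hQ0 x y) (mul_pos (ht x) (ht y)).le) (sq_nonneg _)
  have hsum0 : 0 ≤ ∑ x, ∑ y, Q x y * (t x * t y) * (v' x / t x - v' y / t y) ^ 2 :=
    Finset.sum_nonneg fun x _ => Finset.sum_nonneg fun y _ => hnn x y
  have hw0 : 0 ≤ ∑ x, w x ^ 2 := Finset.sum_nonneg fun x _ => sq_nonneg _
  have hz : ∑ x, ∑ y, Q x y * (t x * t y) * (v' x / t x - v' y / t y) ^ 2 = 0 := by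
    nlinarith
  have hterm : ∀ x, Q o x * (t o * t x) * (v' o / t o - v' x / t x) ^ 2 = 0 := by
    intro x
    have h1 := (Finset.sum_eq_zero_iff_of_nonneg (fun x _ => Finset.sum_nonneg fun y _ => hnn x y)).1 hz o (Finset.mem_univ o)
    exact (Finset.sum_eq_zero_iff_of_nonneg (fun y _ => hnn o y)).1 h1 x (Finset.mem_univ x)
  have hw' : ∀ x, w x * (s x * v x) = (v' o / t o) * (D x * v x) := by
    intro x
    by_cases hx : D x = 0
    · have : s x = 0 := by simp [hs, hd, hx]
      rw [this, hx]; ring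
    · have hpos : 0 < D x := lt_of_le_of_ne (hD0 x) (Ne.symm hx)
      have h2 := hterm x
      have h3 : (v' o / t o - v' x / t x) ^ 2 = 0 :=
        (mul_eq_zero.1 h2).resolve_left (mul_pos (ho x hpos) (mul_pos (ht o) (ht x))).ne'
      have h4 : v' o / t o = v' x / t x := by
        have := pow_eq_zero_iff (two_ne_zero) |>.1 h3
        linarith
      rw [h4, hwv]
      have e : s x * v' x * (s x * v x) = d x * v' x * v x := by rw [← hss]; ring
      rw [e]; simp only [hd]; ring
  calc w ⬝ᵥ (fun x => s x * v x) = ∑ x, (v' o / t o) * (D x * v x) := by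
        simp only [dotProduct, hw']
    _ = 0 := by rw [← Finset.mul_sum, hv, mul_zero]

/-- the X-part of the multiset is an independent set -/
def rlcGood (Indep : Finset X → Prop) (M : Multiset (Option X)) : Prop :=
  (M.filterMap id).Nodup ∧ Indep (M.filterMap id).toFinset

/-- Iterated directional derivative of the generating polynomial. -/
def rlcG (Indep : Finset X → Prop) (c : ℝ) (t : Option X → ℝ) : ℕ → Multiset (Option X) → ℝ
  | 0, M => if rlcGood Indep M then c ^ (M.count none - 1) else 0
  | m + 1, M => ∑ z, t z * rlcG Indep c t m (z ::ₘ M)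

theorem rlcGood_none (Indep : Finset X → Prop) (M : Multiset (Option X)) :
    rlcGood Indep (none ::ₘ M) ↔ rlcGood Indep M := by
  simp [rlcGood]

theorem rlcGood_some (Indep : Finset X → Prop)
    (h_hered : ∀ S T : Finset X, S ⊆ T → Indep T → Indep S) (M : Multiset (Option X)) (x : X) :
    rlcGood Indep (some x ::ₘ M) ↔ rlcGood Indep M ∧ x ∈ mCont Indep (M.filterMap id).toFinset := by
  have : (some x ::ₘ M).filterMap id = x ::ₘ M.filterMap id := by
    rw [Multiset.filterMap_cons_some]; rfl
  simp only [rlcGood, this, Multiset.nodup_cons, Multiset.toFinset_cons, mCont, Finset.mem_filter,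
    Finset.mem_univ, true_and, Multiset.mem_toFinset]
  constructor
  · rintro ⟨⟨h1, h2⟩, h3⟩
    exact ⟨⟨h2, h_hered _ _ (Finset.subset_insert _ _) h3⟩, h1, h3⟩
  · rintro ⟨⟨h2, h4⟩, h1, h3⟩
    exact ⟨⟨h1, h2⟩, h3⟩

theorem rlcGood_of_cons (Indep : Finset X → Prop)
    (h_hered : ∀ S T : Finset X, S ⊆ T → Indep T → Indep S) (M : Multiset (Option X)) (z : Option X)
    (h : rlcGood Indep (z ::ₘ M)) : rlcGood Indep M := by
  cases z with
  | none => exact (rlcGood_none Indep M).1 h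
  | some x => exact ((rlcGood_some Indep h_hered M x).1 h).1

theorem rlcG_zero (Indep : Finset X → Prop)
    (h_hered : ∀ S T : Finset X, S ⊆ T → Indep T → Indep S) (c : ℝ) (t : Option X → ℝ)
    (m : ℕ) : ∀ M, ¬ rlcGood Indep M → rlcG Indep c t m M = 0 := by
  induction m with
  | zero => intro M hM; simp [rlcG, hM]
  | succ m ih =>
    intro M hM
    simp only [rlcG]
    apply Finset.sum_eq_zero
    intro z _
    rw [ih _ (fun h => hM (rlcGood_of_cons Indep h_hered M z h)), mul_zero]

theorem rlcG_nonneg (Indep : Finset X → Prop) (c : ℝ) (hc : 0 < c) (t : Option X → ℝ) (ht : ∀ x, 0 < t x)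
    (m : ℕ) : ∀ M, 0 ≤ rlcG Indep c t m M := by
  induction m with
  | zero => intro M; simp only [rlcG]; split_ifs <;> positivity
  | succ m ih =>
    intro M
    exact Finset.sum_nonneg fun z _ => mul_nonneg (ht z).le (ih _)

theorem rlcG_pos (Indep : Finset X → Prop) (c : ℝ) (hc : 0 < c) (t : Option X → ℝ) (ht : ∀ x, 0 < t x)
    (m : ℕ) : ∀ M, rlcGood Indep M → 0 < rlcG Indep c t m M := by
  induction m with
  | zero => intro M hM; simp only [rlcG, hM, if_true]; positivity
  | succ m ih =>
    intro M hM
    refine Finset.sum_pos' (fun z _ => mul_nonneg (ht z).le (rlcG_nonneg Indep c hc t ht m _))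
      ⟨none, Finset.mem_univ _, mul_pos (ht _) (ih _ ((rlcGood_none Indep M).2 hM))⟩

theorem rlc_classes {β : Type*} [DecidableEq β] (C : Finset X) (cl : X → β) (v : X → ℝ) :
    ∃ Y : ℝ, 0 ≤ Y ∧ (∑ x ∈ C, v x) ^ 2 ≤ (C.image cl).card * Y ∧
      ∑ x ∈ C, ∑ y ∈ C, (if cl x = cl y then 0 else v x * v y) = (∑ x ∈ C, v x) ^ 2 - Y := by
  refine ⟨∑ b ∈ C.image cl, (∑ x ∈ C with cl x = b, v x) ^ 2,
    Finset.sum_nonneg fun _ _ => sq_nonneg _, ?_, ?_⟩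
  · have h := Finset.sum_fiberwise_of_maps_to (s := C) (t := C.image cl) (g := cl)
      (fun x hx => Finset.mem_image_of_mem cl hx) v
    rw [← h]
    exact sq_sum_le_card_mul_sum_sq
  · have h1 : ∑ b ∈ C.image cl, (∑ x ∈ C with cl x = b, v x) ^ 2
        = ∑ x ∈ C, ∑ y ∈ C, (if cl x = cl y then v x * v y else 0) := by
      rw [← Finset.sum_fiberwise_of_maps_to (s := C) (t := C.image cl) (g := cl)
        (fun x hx => Finset.mem_image_of_mem cl hx)
        (fun x => ∑ y ∈ C, (if cl x = cl y then v x * v y else 0))]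
      refine Finset.sum_congr rfl fun b _ => ?_
      rw [sq, Finset.sum_mul]
      refine Finset.sum_congr rfl fun x hx => ?_
      have hxb := (Finset.mem_filter.1 hx).2
      rw [Finset.mul_sum, Finset.sum_filter]
      refine Finset.sum_congr rfl fun y _ => ?_
      rw [hxb]
      by_cases hy : cl y = b
      · simp [hy]
      · rw [if_neg hy, if_neg (Ne.symm hy)]
    rw [h1, sq, Finset.sum_mul_sum, ← Finset.sum_sub_distrib]
    refine Finset.sum_congr rfl fun x _ => ?_
    rw [← Finset.sum_sub_distrib]
    refine Finset.sum_congr rfl fun y _ => ?_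
    split_ifs <;> ring

theorem rlc_par_trans (Indep : Finset X → Prop)
    (h_exch : ∀ S T : Finset X, Indep S → Indep T → S.card < T.card →
      ∃ x ∈ T, x ∉ S ∧ Indep (insert x S)) (S : Finset X) (x y z : X)
    (hx : x ∈ mCont Indep S) (hy : y ∈ mCont Indep S) (hz : z ∈ mCont Indep S)
    (hxy : x = y ∨ ¬ Indep (insert x (insert y S))) (hyz : y = z ∨ ¬ Indep (insert y (insert z S))) :
    x = z ∨ ¬ Indep (insert x (insert z S)) := by
  rcases hxy with rfl | hxy
  · exact hyz
  rcases hyz with rfl | hyz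
  · exact Or.inr hxy
  by_cases hxz : x = z
  · exact Or.inl hxz
  right
  intro hI
  simp only [mCont, Finset.mem_filter, Finset.mem_univ, true_and] at hx hy hz
  have hc : (insert y S).card < (insert x (insert z S)).card := by
    rw [Finset.card_insert_of_notMem hy.1, Finset.card_insert_of_notMem (by simp [hxz, hx.1]),
      Finset.card_insert_of_notMem hz.1]
    omega
  obtain ⟨w, hw, hw', hwI⟩ := h_exch _ _ hy.2 hI hc
  rcases Finset.mem_insert.1 hw with rfl | hw
  · exact hxy hwI
  rcases Finset.mem_insert.1 hw with rfl | hw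
  · exact hyz (by rw [Finset.insert_comm]; exact hwI)
  · exact hw' (Finset.mem_insert_of_mem hw)

theorem rlc_parClass_iff (Indep : Finset X → Prop)
    (h_exch : ∀ S T : Finset X, Indep S → Indep T → S.card < T.card →
      ∃ x ∈ T, x ∉ S ∧ Indep (insert x S)) (S : Finset X) (x y : X)
    (hx : x ∈ mCont Indep S) (hy : y ∈ mCont Indep S) :
    mParClass Indep S x = mParClass Indep S y ↔ (x = y ∨ ¬ Indep (insert x (insert y S))) := by
  constructor
  · intro h
    have : x ∈ mParClass Indep S x := by simp [mParClass, hx]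
    rw [h] at this
    exact (Finset.mem_filter.1 this).2
  · intro h
    have h' : y = x ∨ ¬ Indep (insert y (insert x S)) := by
      rcases h with h | h
      · exact Or.inl h.symm
      · right; rwa [Finset.insert_comm]
    ext z
    simp only [mParClass, Finset.mem_filter]
    constructor
    · rintro ⟨hz, h1⟩
      exact ⟨hz, rlc_par_trans Indep h_exch S z x y hz hx hy h1 h⟩
    · rintro ⟨hz, h1⟩
      exact ⟨hz, rlc_par_trans Indep h_exch S z y x hz hy hx h1 h'⟩

theorem rlc_base (Indep : Finset X → Prop)
    (h_hered : ∀ S T : Finset X, S ⊆ T → Indep T → Indep S)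
    (h_exch : ∀ S T : Finset X, Indep S → Indep T → S.card < T.card →
      ∃ x ∈ T, x ∉ S ∧ Indep (insert x S)) (n : ℕ) (hp : 2 ≤ contNum Indep n) (c : ℝ)
    (hc : c = 1 + 1 / ((contNum Indep n : ℝ) - 1)) (t : Option X → ℝ) (L : Multiset (Option X))
    (hL : L.card = n) : rlcHyp (fun x y => rlcG Indep c t 0 (x ::ₘ y ::ₘ L)) := by
  by_cases hg : rlcGood Indep L
  swap
  · refine ⟨0, fun v _ => ?_⟩
    have : ∀ x y, rlcG Indep c t 0 (x ::ₘ y ::ₘ L) = 0 := fun x y =>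
      rlcG_zero Indep h_hered c t 0 _ fun h => hg (rlcGood_of_cons Indep h_hered _ _
        (rlcGood_of_cons Indep h_hered _ _ h))
    simp [rlcQ, this]
  have hp' : (2:ℝ) ≤ contNum Indep n := by exact_mod_cast hp
  set p : ℝ := ((contNum Indep n : ℕ) : ℝ) with hpdef
  have hc0 : 0 < c := by
    rw [hc]; have : 0 < p - 1 := by linarith
    positivity
  have hcp : c * (p - 1) = p := by
    rw [hc]; have : p - 1 ≠ 0 := by linarith
    field_simp; ring
  set S := (L.filterMap id).toFinset with hS
  set i := L.count none with hi
  set C := mCont Indep S with hC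
  set cl := mParClass Indep S with hcl
  have h00 : rlcG Indep c t 0 (none ::ₘ none ::ₘ L) = c ^ (i + 1) := by
    simp [rlcG, rlcGood_none, hg, hi]
  have h0x : ∀ x, rlcG Indep c t 0 (some x ::ₘ none ::ₘ L) = if x ∈ C then c ^ i else 0 := by
    intro x
    have e : rlcGood Indep (some x ::ₘ none ::ₘ L) ↔ x ∈ C := by
      rw [Multiset.cons_swap, rlcGood_none, rlcGood_some Indep h_hered]
      simp [hg, hC, hS]
    simp only [rlcG, e]
    simp [hi]
  have hxy : ∀ x y, rlcG Indep c t 0 (some x ::ₘ some y ::ₘ L)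
      = if x ∈ C then (if y ∈ C then (if cl x = cl y then 0 else c ^ (i - 1)) else 0) else 0 := by
    intro x y
    have e : rlcGood Indep (some x ::ₘ some y ::ₘ L) ↔ (x ∈ C ∧ y ∈ C ∧ ¬ cl x = cl y) := by
      rw [rlcGood_some Indep h_hered, rlcGood_some Indep h_hered]
      have e' : ((some y ::ₘ L).filterMap id).toFinset = insert y S := by
        rw [Multiset.filterMap_cons_some (b := y) id (some y) L rfl, Multiset.toFinset_cons]
      rw [e', ← hS, ← hC]
      constructor
      · rintro ⟨⟨_, hy⟩, hx⟩
        simp only [mCont, Finset.mem_filter, Finset.mem_univ, true_and, Finset.mem_insert, not_or] at hx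
        have hx' : x ∈ C := by
          simp only [hC, mCont, Finset.mem_filter, Finset.mem_univ, true_and]
          exact ⟨hx.1.2, h_hered _ _ (Finset.insert_subset_insert _ (Finset.subset_insert _ _)) hx.2⟩
        refine ⟨hx', hy, ?_⟩
        rw [hcl, rlc_parClass_iff Indep h_exch S x y hx' hy]
        rintro (h | h)
        · exact hx.1.1 h
        · exact h hx.2
      · rintro ⟨hx, hy, h⟩
        rw [hcl, rlc_parClass_iff Indep h_exch S x y hx hy] at h
        push Not at h
        refine ⟨⟨hg, hy⟩, ?_⟩
        simp only [hC, mCont, Finset.mem_filter, Finset.mem_univ, true_and] at hx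
        simp only [mCont, Finset.mem_filter, Finset.mem_univ, true_and, Finset.mem_insert, not_or]
        exact ⟨⟨h.1, hx.1⟩, h.2⟩
    simp only [rlcG, e]
    by_cases h1 : x ∈ C <;> by_cases h2 : y ∈ C <;> by_cases h3 : cl x = cl y <;>
      simp [h1, h2, h3, hi]
  refine ⟨fun o => o.elim c (fun x => if x ∈ C then 1 else 0), fun v hv => ?_⟩
  obtain ⟨Y, hY0, hY1, hY2⟩ := rlc_classes C cl (fun x => v (some x))
  set e := ∑ x ∈ C, v (some x) with he
  have hv' : c * v none + e = 0 := by
    rw [Fintype.sum_option] at hv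
    simpa [Finset.sum_ite_mem, he, Finset.sum_filter] using hv
  have hform : rlcQ (fun x y => rlcG Indep c t 0 (x ::ₘ y ::ₘ L)) v v
      = c ^ (i + 1) * v none ^ 2 + 2 * c ^ i * v none * e + c ^ (i - 1) * (e ^ 2 - Y) := by
    unfold rlcQ
    simp only [Fintype.sum_option, h00, h0x, hxy, Finset.sum_add_distrib]
    have a1 : ∑ y, v none * rlcG Indep c t 0 (none ::ₘ some y ::ₘ L) * v (some y) = c ^ i * v none * e := by
      simp only [fun y => Multiset.cons_swap none (some y) L, h0x]
      rw [he, Finset.mul_sum, ← Finset.sum_filter_add_sum_filter_not Finset.univ (· ∈ C)]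
      rw [Finset.sum_filter, Finset.sum_filter]
      rw [← Finset.sum_add_distrib, ← Finset.sum_subset (Finset.subset_univ C)]
      · refine Finset.sum_congr rfl fun x hx => ?_
        simp only [hx, if_true, not_true, if_false, add_zero]; ring
      · intro x _ hx; simp [hx]
    have a2 : ∑ x, v (some x) * (if x ∈ C then c ^ i else 0) * v none = c ^ i * v none * e := by
      rw [he, Finset.mul_sum, ← Finset.sum_subset (Finset.subset_univ C)]
      · refine Finset.sum_congr rfl fun x hx => ?_
        simp only [hx, if_true, not_true, if_false, add_zero]; ring
      · intro x _ hx; simp [hx]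
    have a3 : ∑ x, ∑ y, v (some x) * (if x ∈ C then (if y ∈ C then (if cl x = cl y then 0 else c ^ (i - 1)) else 0) else 0) * v (some y) = c ^ (i - 1) * (e ^ 2 - Y) := by
      rw [← hY2, Finset.mul_sum, ← Finset.sum_subset (Finset.subset_univ C)]
      · refine Finset.sum_congr rfl fun x hx => ?_
        rw [Finset.mul_sum, ← Finset.sum_subset (Finset.subset_univ C)]
        · refine Finset.sum_congr rfl fun y hy => ?_
          by_cases h3 : cl x = cl y <;> simp [hx, hy, h3]; ring
        · intro y _ hy; simp [hy]
      · intro x _ hx; simp [hx]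
    rw [a1, a2, a3]; ring
  rw [hform]
  have he' : e = - (c * v none) := by linarith
  by_cases hi0 : i = 0
  · have hcard : S.card = n := by
      rw [hS, Multiset.toFinset_card_of_nodup hg.1, ← hL]
      have hLs : L = (L.filterMap id).map some := by
        have : none ∉ L := Multiset.count_eq_zero.1 hi0
        clear_value S i C cl
        clear * - this
        induction L using Multiset.induction_on with
        | empty => rfl
        | cons a M ih =>
          cases a with
          | none => simp at this
          | some x =>
            rw [Multiset.filterMap_cons_some (b := x) id (some x) M rfl, Multiset.map_cons, ← ih]
            intro h; exact this (Multiset.mem_cons_of_mem h)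
      conv_rhs => rw [hLs, Multiset.card_map]
    have hle : (C.image cl).card ≤ contNum Indep n := by
      have := Finset.le_sup (f := fun S => (mParClasses Indep S).card)
        (s := Finset.univ.filter (fun S : Finset X => Indep S ∧ S.card = n)) (b := S)
        (by simp only [Finset.mem_filter, Finset.mem_univ, true_and]; exact ⟨hg.2, hcard⟩)
      exact this
    have hle' : ((C.image cl).card : ℝ) ≤ p := by rw [hpdef]; exact_mod_cast hle
    have hY3 : e ^ 2 ≤ p * Y := hY1.trans (mul_le_mul_of_nonneg_right hle' hY0)
    rw [he'] at hY3 ⊢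
    simp only [hi0, zero_add, pow_one, pow_zero, Nat.zero_sub, one_mul, mul_one]
    have hp0 : 0 < p := by linarith
    have : p * (c * v none ^ 2 + 2 * v none * -(c * v none) + ((-(c * v none)) ^ 2 - Y)) ≤ 0 := by
      have e1 : p * (c * v none ^ 2 + 2 * v none * -(c * v none) + ((-(c * v none)) ^ 2 - Y))
          = c * v none ^ 2 * (c * (p - 1) - p) + ((-(c * v none)) ^ 2 - p * Y) := by ring
      rw [e1, hcp]; linarith
    exact nonpos_of_mul_nonpos_right this hp0
  · obtain ⟨j, hj⟩ := Nat.exists_eq_succ_of_ne_zero hi0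
    rw [he', hj]
    simp only [Nat.succ_eq_add_one, Nat.add_sub_cancel]
    have : 0 ≤ c ^ j * Y := by positivity
    have e1 : c ^ (j + 1 + 1) * v none ^ 2 + 2 * c ^ (j + 1) * v none * -(c * v none) +
      c ^ j * ((-(c * v none)) ^ 2 - Y) = - (c ^ j * Y) := by ring
    rw [e1]; linarith

theorem rlc_hyp (Indep : Finset X → Prop)
    (h_hered : ∀ S T : Finset X, S ⊆ T → Indep T → Indep S)
    (h_exch : ∀ S T : Finset X, Indep S → Indep T → S.card < T.card →
      ∃ x ∈ T, x ∉ S ∧ Indep (insert x S)) (n : ℕ) (hp : 2 ≤ contNum Indep n) (c : ℝ)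
    (hc : c = 1 + 1 / ((contNum Indep n : ℝ) - 1)) (t : Option X → ℝ) (ht : ∀ x, 0 < t x) (m : ℕ) :
    ∀ L : Multiset (Option X), L.card + m = n →
      rlcHyp (fun x y => rlcG Indep c t m (x ::ₘ y ::ₘ L)) := by
  have hc0 : 0 < c := by
    have hp' : (2:ℝ) ≤ contNum Indep n := by exact_mod_cast hp
    rw [hc]; have : 0 < (contNum Indep n : ℝ) - 1 := by linarith
    positivity
  induction m with
  | zero => intro L hL; exact rlc_base Indep h_hered h_exch n hp c hc t L (by omega)
  | succ m ih =>
    intro L hL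
    refine rlc_step _ (fun x y => by rw [Multiset.cons_swap])
      (fun x y => rlcG_nonneg Indep c hc0 t ht _ _) t ht none ?_
      (fun z x y => rlcG Indep c t m (z ::ₘ x ::ₘ y ::ₘ L)) ?_ ?_ ?_ ?_ ?_
    · intro x hx
      apply rlcG_pos Indep c hc0 t ht
      rw [rlcGood_none]
      by_contra hb
      refine hx.ne' (Finset.sum_eq_zero fun y _ => ?_)
      rw [rlcG_zero Indep h_hered, zero_mul]
      intro h
      rw [Multiset.cons_swap] at h
      exact hb (rlcGood_of_cons Indep h_hered _ _ h)
    · intro z x y; rw [Multiset.cons_swap x y]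
    · intro z x y; rw [Multiset.cons_swap z x]
    · intro z x y; exact rlcG_nonneg Indep c hc0 t ht _ _
    · intro x y; rfl
    · intro z
      have := ih (z ::ₘ L) (by rw [Multiset.card_cons]; omega)
      have e : (fun x y => rlcG Indep c t m (z ::ₘ x ::ₘ y ::ₘ L))
        = (fun x y => rlcG Indep c t m (x ::ₘ y ::ₘ z ::ₘ L)) := by
        funext x y
        rw [Multiset.cons_swap z x, Multiset.cons_swap z y]
      show rlcHyp (fun x y => rlcG Indep c t m (z ::ₘ x ::ₘ y ::ₘ L))
      rw [e]; exact this

/-- the direction -/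
def rlcT (X : Type*) (ε : ℝ) : Option X → ℝ := fun o => o.elim ε (fun _ => 1)

theorem rlcG_cont (Indep : Finset X → Prop) (c : ℝ) (m : ℕ) :
    ∀ M, Continuous (fun ε : ℝ => rlcG Indep c (rlcT X ε) m M) := by
  induction m with
  | zero => intro M; simp only [rlcG]; exact continuous_const
  | succ m ih =>
    intro M
    simp only [rlcG]
    refine continuous_finsetSum _ fun z _ => Continuous.mul ?_ (ih _)
    cases z with
    | none => exact continuous_id
    | some x => exact continuous_const

theorem rlcG_count (Indep : Finset X → Prop)
    (h_hered : ∀ S T : Finset X, S ⊆ T → Indep T → Indep S) (c : ℝ) (m : ℕ) :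
    ∀ M, rlcGood Indep M → rlcG Indep c (rlcT X 0) m M = c ^ (M.count none - 1) * (m.factorial *
      (Finset.univ.filter (fun U : Finset X => Indep U ∧ (M.filterMap id).toFinset ⊆ U ∧
        U.card = (M.filterMap id).toFinset.card + m)).card) := by
  induction m with
  | zero =>
    intro M hM
    have : Finset.univ.filter (fun U : Finset X => Indep U ∧ (M.filterMap id).toFinset ⊆ U ∧
        U.card = (M.filterMap id).toFinset.card + 0) = {(M.filterMap id).toFinset} := by
      ext U
      simp only [Finset.mem_filter, Finset.mem_univ, true_and, Finset.mem_singleton, add_zero]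
      constructor
      · rintro ⟨_, h1, h2⟩
        exact (Finset.eq_of_subset_of_card_le h1 h2.le).symm
      · rintro rfl
        exact ⟨hM.2, subset_rfl, rfl⟩
    rw [this]
    simp [rlcG, hM]
  | succ m ih =>
    intro M hM
    set S := (M.filterMap id).toFinset with hS
    simp only [rlcG]
    rw [Fintype.sum_option]
    simp only [rlcT, Option.elim, zero_mul, zero_add, one_mul]
    have h1 : ∀ x, rlcG Indep c (rlcT X 0) m (some x ::ₘ M) = c ^ (M.count none - 1) * (m.factorial *
        ∑ U : Finset X, if (Indep U ∧ S ⊆ U ∧ U.card = S.card + (m + 1)) ∧ x ∈ U \ S then (1:ℝ) else 0) := by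
      intro x
      by_cases hx : x ∈ mCont Indep S
      · have hx' := hx
        simp only [mCont, Finset.mem_filter, Finset.mem_univ, true_and] at hx'
        rw [ih _ ((rlcGood_some Indep h_hered M x).2 ⟨hM, hx⟩)]
        rw [Multiset.filterMap_cons_some (b := x) id (some x) M rfl, Multiset.toFinset_cons, ← hS,
          Finset.card_insert_of_notMem hx'.1, Multiset.count_cons_of_ne (by simp)]
        congr 2
        rw [Finset.card_filter, Nat.cast_sum]
        refine Finset.sum_congr rfl fun U _ => ?_
        rw [Nat.cast_ite, Nat.cast_one, Nat.cast_zero]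
        refine if_congr ?_ rfl rfl
        rw [Finset.insert_subset_iff, Finset.mem_sdiff]
        constructor
        · rintro ⟨a, ⟨b, c⟩, d⟩; exact ⟨⟨a, c, by omega⟩, b, hx'.1⟩
        · rintro ⟨⟨a, c, d⟩, b, _⟩; exact ⟨a, ⟨b, c⟩, by omega⟩
      · rw [rlcG_zero Indep h_hered]
        · rw [Finset.sum_eq_zero]
          · simp
          intro U _
          rw [if_neg]
          rintro ⟨⟨a, b, _⟩, hxU⟩
          rw [Finset.mem_sdiff] at hxU
          apply hx
          simp only [mCont, Finset.mem_filter, Finset.mem_univ, true_and]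
          exact ⟨hxU.2, h_hered _ _ (Finset.insert_subset hxU.1 b) a⟩
        · intro h
          exact hx ((rlcGood_some Indep h_hered M x).1 h).2
    have h1' : ∀ x, rlcG Indep c (fun o : Option X => o.elim 0 fun _ => 1) m (some x ::ₘ M) = _ := h1
    have h2 : ∑ x, rlcG Indep c (rlcT X 0) m (some x ::ₘ M) = c ^ (M.count none - 1) * (m.factorial *
      ∑ U : Finset X, ∑ x, if (Indep U ∧ S ⊆ U ∧ U.card = S.card + (m + 1)) ∧ x ∈ U \ S then (1:ℝ) else 0) := by
      simp only [h1]
      rw [← Finset.mul_sum, ← Finset.mul_sum, Finset.sum_comm]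
    refine h2.trans ?_
    congr 1
    rw [Nat.factorial_succ, Nat.cast_mul, mul_comm ((m+1 : ℕ) : ℝ), mul_assoc]
    congr 1
    rw [Finset.card_filter, Nat.cast_sum, Finset.mul_sum]
    refine Finset.sum_congr rfl fun U _ => ?_
    by_cases hU : Indep U ∧ S ⊆ U ∧ U.card = S.card + (m + 1)
    · simp only [hU, true_and, and_self, if_true]
      rw [Finset.sum_boole]
      have : (Finset.univ.filter (fun x => x ∈ U \ S)) = U \ S := by ext; simp
      rw [this, Finset.card_sdiff_of_subset hU.2.1, hU.2.2]
      simp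
    · simp [hU]

theorem rlc_count_rep (Indep : Finset X → Prop)
    (h_hered : ∀ S T : Finset X, S ⊆ T → Indep T → Indep S) (h0 : Indep ∅) (c : ℝ) (m j : ℕ) :
    rlcG Indep c (rlcT X 0) m (Multiset.replicate j none) =
      c ^ (j - 1) * (m.factorial * numIndep Indep m) := by
  have hf : (Multiset.replicate j (none : Option X)).filterMap id = 0 := by
    induction j with
    | zero => rfl
    | succ j ih => rw [Multiset.replicate_succ, Multiset.filterMap_cons_none _ _ rfl, ih]
  rw [rlcG_count Indep h_hered c m _ ⟨by simp [hf], by simpa [hf] using h0⟩]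
  rw [hf, Multiset.count_replicate_self]
  simp [numIndep]

theorem rlc_limit (Indep : Finset X → Prop)
    (h_hered : ∀ S T : Finset X, S ⊆ T → Indep T → Indep S)
    (h_exch : ∀ S T : Finset X, Indep S → Indep T → S.card < T.card →
      ∃ x ∈ T, x ∉ S ∧ Indep (insert x S)) (n : ℕ) (hp : 2 ≤ contNum Indep n) (c : ℝ)
    (hc : c = 1 + 1 / ((contNum Indep n : ℝ) - 1)) (u v : Option X → ℝ) (ε : ℝ) (hε : 0 < ε)
    (hu : 0 < rlcQ (fun x y => rlcG Indep c (rlcT X ε) n {x, y}) u u) :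
    rlcQ (fun x y => rlcG Indep c (rlcT X ε) n {x, y}) u u * rlcQ (fun x y => rlcG Indep c (rlcT X ε) n {x, y}) v v
      ≤ rlcQ (fun x y => rlcG Indep c (rlcT X ε) n {x, y}) u v ^ 2 := by
  refine rlcHyp_cs _ (fun x y => by rw [Multiset.pair_comm]) ?_ u v hu
  refine rlc_hyp Indep h_hered h_exch n hp c hc (rlcT X ε) ?_ n 0 (by simp)
  intro x
  cases x with
  | none => exact hε
  | some x => exact one_pos

theorem rlcQ_cont (Indep : Finset X → Prop) (c : ℝ) (m : ℕ) (u v : Option X → ℝ) :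
    Continuous (fun ε : ℝ => rlcQ (fun x y => rlcG Indep c (rlcT X ε) m {x, y}) u v) := by
  unfold rlcQ
  refine continuous_finsetSum _ fun x _ => continuous_finsetSum _ fun y _ => ?_
  exact (continuous_const.mul (rlcG_cont Indep c m _)).mul continuous_const

theorem rlc_contNum (Indep : Finset X → Prop)
    (h_hered : ∀ S T : Finset X, S ⊆ T → Indep T → Indep S)
    (h_exch : ∀ S T : Finset X, Indep S → Indep T → S.card < T.card →
      ∃ x ∈ T, x ∉ S ∧ Indep (insert x S)) (n : ℕ) (T : Finset X) (hT : Indep T)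
    (hTc : T.card = n + 2) : 2 ≤ contNum Indep n := by
  obtain ⟨x, T1, hx, rfl, h1⟩ := Finset.card_eq_succ.1 hTc
  obtain ⟨y, S, hy, rfl, h2⟩ := Finset.card_eq_succ.1 h1
  have hxy : x ≠ y := fun h => hx (by simp [h])
  have hxS : x ∉ S := fun h => hx (by simp [h])
  have hxC : x ∈ mCont Indep S := by
    simp only [mCont, Finset.mem_filter, Finset.mem_univ, true_and]
    exact ⟨hxS, h_hered _ _ (Finset.insert_subset_insert _ (Finset.subset_insert _ _)) hT⟩
  have hyC : y ∈ mCont Indep S := by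
    simp only [mCont, Finset.mem_filter, Finset.mem_univ, true_and]
    exact ⟨hy, h_hered _ _ (Finset.subset_insert _ _) hT⟩
  have hne : mParClass Indep S x ≠ mParClass Indep S y := by
    rw [Ne, rlc_parClass_iff Indep h_exch S x y hxC hyC]
    rintro (h | h)
    · exact hxy h
    · exact h hT
  have hle := Finset.le_sup (f := fun S => (mParClasses Indep S).card)
        (s := Finset.univ.filter (fun S : Finset X => Indep S ∧ S.card = n)) (b := S)
        (by simp only [Finset.mem_filter, Finset.mem_univ, true_and]
            exact ⟨h_hered _ _ ((Finset.subset_insert _ _).trans (Finset.subset_insert _ _)) hT, h2⟩)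
  refine le_trans ?_ hle
  have : 1 < (mParClasses Indep S).card :=
    Finset.one_lt_card.2 ⟨_, Finset.mem_image_of_mem _ hxC, _, Finset.mem_image_of_mem _ hyC, hne⟩
  exact this

/-- **Refined log-concavity for matroids.** -/
theorem matroid_refined_log_concavity
    (Indep : Finset X → Prop)
    (h_ne : ∃ S : Finset X, Indep S)
    (h_hered : ∀ S T : Finset X, S ⊆ T → Indep T → Indep S)
    (h_exch : ∀ S T : Finset X, Indep S → Indep T → S.card < T.card →
      ∃ x ∈ T, x ∉ S ∧ Indep (insert x S))
    (k : ℕ) (hk1 : 1 ≤ k) (hk2 : k < matroidRk Indep) :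
    ((1 : ℝ) + 1 / (k : ℝ)) * (1 + 1 / ((contNum Indep (k - 1) : ℝ) - 1)) *
        (numIndep Indep (k - 1) : ℝ) * (numIndep Indep (k + 1) : ℝ) ≤
      (numIndep Indep k : ℝ) ^ 2 := by
  obtain ⟨n, rfl⟩ : ∃ n, k = n + 1 := ⟨k - 1, by omega⟩
  rw [Nat.add_sub_cancel]
  by_cases hz : numIndep Indep (n + 1 + 1) = 0
  · rw [hz]; simp
  have hzpos : 0 < numIndep Indep (n + 1 + 1) := Nat.pos_of_ne_zero hz
  obtain ⟨T, hT⟩ := Finset.card_pos.1 hzpos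
  simp only [Finset.mem_filter, Finset.mem_univ, true_and] at hT
  have hp := rlc_contNum Indep h_hered h_exch n T hT.1 hT.2
  have h0 : Indep ∅ := h_hered _ _ (Finset.empty_subset T) hT.1
  obtain ⟨c, hc⟩ : ∃ c : ℝ, c = 1 + 1 / ((contNum Indep n : ℝ) - 1) := ⟨_, rfl⟩
  rw [← hc]
  set u : Option X → ℝ := rlcT X 0 with hu
  set v : Option X → ℝ := fun o => o.elim 1 (fun _ => 0) with hv
  have euu : rlcQ (fun x y => rlcG Indep c (rlcT X 0) n {x, y}) u u
      = (n + 1 + 1).factorial * numIndep Indep (n + 1 + 1) := by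
    have := rlc_count_rep Indep h_hered h0 c (n + 1 + 1) 0
    simp only [rlcG, Multiset.replicate_zero] at this
    rw [Nat.zero_sub, pow_zero, one_mul] at this
    rw [← this]
    unfold rlcQ
    refine Finset.sum_congr rfl fun x _ => ?_
    rw [Finset.mul_sum]
    refine Finset.sum_congr rfl fun y _ => ?_
    have : ({x, y} : Multiset (Option X)) = y ::ₘ x ::ₘ 0 := by
      rw [Multiset.pair_comm]; rfl
    show u x * rlcG Indep c (rlcT X 0) n {x, y} * u y = _
    rw [this]; ring
  have euv : rlcQ (fun x y => rlcG Indep c (rlcT X 0) n {x, y}) u v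
      = (n + 1).factorial * numIndep Indep (n + 1) := by
    have := rlc_count_rep Indep h_hered h0 c (n + 1) 1
    simp only [rlcG, Multiset.replicate_one] at this
    rw [Nat.sub_self, pow_zero, one_mul] at this
    rw [← this]
    unfold rlcQ
    refine Finset.sum_congr rfl fun x _ => ?_
    rw [Fintype.sum_option]
    simp only [hv, Option.elim, mul_zero, Finset.sum_const_zero, add_zero, mul_one]
    rfl
  have evv : rlcQ (fun x y => rlcG Indep c (rlcT X 0) n {x, y}) v v
      = c * (n.factorial * numIndep Indep n) := by
    have := rlc_count_rep Indep h_hered h0 c n 2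
    rw [show 2 - 1 = 1 from rfl, pow_one] at this
    rw [← this]
    unfold rlcQ
    rw [Fintype.sum_option, Fintype.sum_option]
    simp only [hv, Option.elim, mul_zero, zero_mul, Finset.sum_const_zero, add_zero, mul_one, one_mul]
    rfl
  have hpos : 0 < rlcQ (fun x y => rlcG Indep c (rlcT X 0) n {x, y}) u u := by
    rw [euu]; positivity
  have hcont := rlcQ_cont Indep c n
  have hev : ∀ᶠ ε in nhdsWithin (0:ℝ) (Set.Ioi 0),
      rlcQ (fun x y => rlcG Indep c (rlcT X ε) n {x, y}) u u * rlcQ (fun x y => rlcG Indep c (rlcT X ε) n {x, y}) v v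
      ≤ rlcQ (fun x y => rlcG Indep c (rlcT X ε) n {x, y}) u v ^ 2 := by
    have h1 : ∀ᶠ ε in nhdsWithin (0:ℝ) (Set.Ioi 0),
        0 < rlcQ (fun x y => rlcG Indep c (rlcT X ε) n {x, y}) u u :=
      (((hcont u u).tendsto 0).mono_left nhdsWithin_le_nhds).eventually (lt_mem_nhds hpos)
    filter_upwards [h1, self_mem_nhdsWithin] with ε h1 h2
    exact rlc_limit Indep h_hered h_exch n hp c hc u v ε h2 h1
  have hlim : rlcQ (fun x y => rlcG Indep c (rlcT X 0) n {x, y}) u u *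
      rlcQ (fun x y => rlcG Indep c (rlcT X 0) n {x, y}) v v
      ≤ rlcQ (fun x y => rlcG Indep c (rlcT X 0) n {x, y}) u v ^ 2 := le_of_tendsto_of_tendsto
    ((((hcont u u).mul (hcont v v)).tendsto 0).mono_left nhdsWithin_le_nhds)
    ((((hcont u v).pow 2).tendsto 0).mono_left nhdsWithin_le_nhds) hev
  rw [euu, euv, evv] at hlim
  rw [Nat.factorial_succ (n + 1), Nat.factorial_succ n] at hlim
  push_cast at hlim ⊢
  have hn : (0:ℝ) < (n:ℝ) + 1 := by positivity
  have hf : (0:ℝ) < n.factorial := by positivity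
  have hfac : (0:ℝ) < (((n:ℝ) + 1) * n.factorial) ^ 2 := by positivity
  refine le_of_mul_le_mul_left ?_ hfac
  calc (((n:ℝ) + 1) * n.factorial) ^ 2 * ((1 + 1 / ((n:ℝ) + 1)) * c * (numIndep Indep n : ℝ) * (numIndep Indep (n + 1 + 1) : ℝ))
      = ((n:ℝ) + 1 + 1) * (((n:ℝ) + 1) * n.factorial) * (numIndep Indep (n + 1 + 1) : ℝ) * (c * (n.factorial * (numIndep Indep n : ℝ))) := by
        field_simp
    _ ≤ _ := hlim
    _ = _ := by ring
end
end

section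
/- Let M = (X, I) be a matroid, let ω : X → ℝ_{>0} be a weight function, and let k be an integer with 1 ≤ k < rk(M). Then I_ω(k)² ≥ (1 + 1/k)·(1 + 1/(p(k−1) − 1))·I_ω(k−1)·I_ω(k+1), where p(k−1) is the (k−1)-continuation number of M (note that p(k−1) ≥ 2 automatically holds since k < rk(M)). -/
open scoped Classical BigOperators

noncomputable section

variable {X : Type*} [Fintype X] [DecidableEq X]

/-- The weighted count of independent sets of size `k`:
`I_ω(k) = Σ_{S ∈ I, |S| = k} Π_{x ∈ S} ω(x)`. -/
def wNumIndep (Indep : Finset X → Prop) (ω : X → ℝ) (k : ℕ) : ℝ :=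
  ∑ S ∈ Finset.univ.filter (fun S : Finset X => Indep S ∧ S.card = k), ∏ x ∈ S, ω x

theorem spec_lemma {E : Type*} [NormedAddCommGroup E] [InnerProductSpace ℝ E] [FiniteDimensional ℝ E]
    (T : E →ₗ[ℝ] E) (hT : T.IsSymmetric) (v β : E) (a : ℝ) (hv : T v = v)
    (h1 : ∀ (e : E) (l : ℝ), 1 ≤ l → T e = l • e → ∃ c : ℝ, e = c • v)
    (h2 : ∀ (σ : ℝ) (u : E), a * σ^2 + 2 * σ * inner ℝ β u + inner ℝ u (T u) ≤ ‖σ • β + T u‖^2)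
    (σ : ℝ) (u : E) (h : σ * inner ℝ β v + inner ℝ u v = 0) :
    a * σ^2 + 2 * σ * inner ℝ β u + inner ℝ u (T u) ≤ 0 := by
  classical
  set n := Module.finrank ℝ E with hn
  let e := hT.eigenvectorBasis hn.symm
  let lam := hT.eigenvalues hn.symm
  have he : ∀ i, T (e i) = lam i • e i := fun i =>
    hT.apply_eigenvectorBasis hn.symm i
  have hself : ∀ i, inner ℝ (e i) (e i) = (1:ℝ) := fun i => by
    rw [real_inner_self_eq_norm_sq, e.orthonormal.1 i]; norm_num
  have hl : ∀ i, lam i ≤ lam i ^ 2 := fun i => by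
    have := h2 0 (e i)
    rw [he i] at this
    simpa [inner_smul_right, hself, norm_smul, e.orthonormal.1 i] using this
  have hneg : ∀ w : E, inner ℝ w v = (0:ℝ) → inner ℝ w (T w) ≤ (0:ℝ) := by
    intro w hw
    rw [← e.sum_inner_mul_inner]
    apply Finset.sum_nonpos
    intro i _
    rw [← hT, he i, inner_smul_left, real_inner_comm (e i) w]
    simp only [conj_trivial]
    by_cases hli : 1 ≤ lam i
    · obtain ⟨c, hc⟩ := h1 _ _ hli (he i)
      have : inner ℝ (e i) w = (0:ℝ) := by
        rw [hc, inner_smul_left, real_inner_comm, hw, mul_zero]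
      rw [this]; simp
    · have h3 := hl i
      have : lam i ≤ 0 := by nlinarith
      nlinarith [mul_self_nonneg (inner ℝ (e i) w : ℝ)]
  set y := σ • β + T u with hy
  have hyv : inner ℝ y v = (0:ℝ) := by
    rw [hy, inner_add_left, inner_smul_left, hT, hv]; simpa using h
  obtain ⟨m, k, hk, hym⟩ : ∃ m k : E, T k = 0 ∧ y = k + T m := by
    refine ⟨∑ i, (inner ℝ (e i) y / lam i) • e i,
      ∑ i, (if lam i = 0 then inner ℝ (e i) y else 0) • e i, ?_, ?_⟩
    · rw [map_sum]
      apply Finset.sum_eq_zero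
      intro i _
      rw [map_smul, he i]
      split_ifs with h0 <;> simp [h0]
    · rw [map_sum, ← Finset.sum_add_distrib]
      conv_lhs => rw [← e.sum_repr' y]
      apply Finset.sum_congr rfl
      intro i _
      rw [map_smul, he i, smul_smul, ← add_smul]
      congr 1
      split_ifs with h0
      · simp [h0]
      · field_simp; simp
  have hkv : inner ℝ k v = (0:ℝ) := by rw [← hv, ← hT, hk, inner_zero_left]
  have hmv : inner ℝ m v = (0:ℝ) := by
    have : inner ℝ m v = inner ℝ y v := by
      rw [hym, inner_add_left, hkv, hT, hv, zero_add]
    rw [this, hyv]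
  have hβ : ∀ w, σ * inner ℝ β w = inner ℝ y w - inner ℝ u (T w) := by
    intro w
    rw [hy, inner_add_left, inner_smul_left, hT]; simp
  have hkm : inner ℝ k (T m) = (0:ℝ) := by rw [← hT, hk, inner_zero_left]
  have hmm := hneg m hmv
  have key : ∀ τ : ℝ, (a * σ^2 + 2 * σ * inner ℝ β u + inner ℝ u (T u)) - inner ℝ m (T m) - 2 * inner ℝ k m
      + 2 * τ * ‖k‖^2 ≤ ‖k‖^2 := by
    intro τ
    have h3 := h2 σ (u - m + τ • k)
    have e1 : σ • β + T (u - m + τ • k) = k := by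
      rw [map_add, map_sub, map_smul, hk, smul_zero, add_zero]
      have : σ • β + (T u - T m) = y - T m := by rw [hy]; abel
      rw [this, hym]; abel
    have e2 : T (u - m + τ • k) = T u - T m := by
      rw [map_add, map_sub, map_smul, hk, smul_zero, add_zero]
    rw [e1, e2] at h3
    have f1 : inner ℝ m (T u) = (inner ℝ u (T m) : ℝ) := by rw [← hT, real_inner_comm]
    have f2 : inner ℝ k (T u) = (0 : ℝ) := by rw [← hT, hk, inner_zero_left]
    have g0 := hβ u
    have g1 := hβ m
    have g2 := hβ k
    rw [hk, inner_zero_right] at g2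
    have g3 : inner ℝ y k = ‖k‖^2 := by
      rw [hym, inner_add_left, real_inner_self_eq_norm_sq, real_inner_comm, hkm, add_zero]
    have g4 : inner ℝ y m = (inner ℝ k m : ℝ) + inner ℝ m (T m) := by
      rw [hym, inner_add_left, real_inner_comm m (T m)]
    simp only [inner_add_right, inner_sub_right, inner_add_left, inner_sub_left, inner_smul_left,
      inner_smul_right, conj_trivial, hkm, f1, f2] at h3
    rw [g3] at g2
    rw [g4] at g1
    linear_combination h3 + 2 * g1 - 2 * τ * g2
  have hk0 : ‖k‖ ^ 2 = 0 := by
    by_contra hne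
    have hpos : 0 < ‖k‖ ^ 2 := lt_of_le_of_ne (sq_nonneg _) (Ne.symm hne)
    set P := (a * σ^2 + 2 * σ * inner ℝ β u + inner ℝ u (T u)) - inner ℝ m (T m)
      - 2 * inner ℝ k m with hP
    have := key ((1 - P / ‖k‖^2 + 1) / 2)
    have hc : P / ‖k‖^2 * ‖k‖^2 = P := div_mul_cancel₀ P hne
    linarith
  have hk1 : k = 0 := by simpa using hk0
  have := key 0
  rw [hk1] at this
  simp at this
  linarith

theorem abs_lemma {Y : Type*} [Fintype Y] (C : Y → Y → ℝ) (b ω : Y → ℝ) (a : ℝ)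
    (hω : ∀ x, 0 < ω x) (hCs : ∀ x y, C x y = C y x) (hC0 : ∀ x y, 0 ≤ C x y)
    (hb : ∀ x, ∑ y, C x y * ω y = 0 → b x = 0)
    (hconn : ∀ f : Y → ℝ, (∀ x y, 0 < C x y → f x = f y) →
      ∀ x y, 0 < ∑ z, C x z * ω z → 0 < ∑ z, C y z * ω z → f x = f y)
    (hineq : ∀ (σ : ℝ) (u : Y → ℝ), a * σ^2 + 2 * σ * (∑ x, b x * u x) + ∑ x, ∑ y, C x y * u x * u y
      ≤ ∑ x, ω x * (σ * b x + ∑ y, C x y * u y)^2 / (∑ y, C x y * ω y))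
    (σ : ℝ) (u : Y → ℝ)
    (h : σ * (∑ x, b x * ω x) + ∑ x, ∑ y, C x y * u x * ω y = 0) :
    a * σ^2 + 2 * σ * (∑ x, b x * u x) + ∑ x, ∑ y, C x y * u x * u y ≤ 0 := by
  classical
  set q : Y → ℝ := fun x => ∑ y, C x y * ω y with hq
  have hq0 : ∀ x, 0 ≤ q x := fun x => Finset.sum_nonneg fun y _ => mul_nonneg (hC0 x y) (hω y).le
  set d : Y → ℝ := fun x => Real.sqrt (q x / ω x) with hd
  have hd0 : ∀ x, 0 ≤ d x := fun x => Real.sqrt_nonneg _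
  have hdq : ∀ x, q x = d x ^ 2 * ω x := by
    intro x
    rw [hd]; simp only
    rw [Real.sq_sqrt (div_nonneg (hq0 x) (hω x).le), div_mul_cancel₀ _ (hω x).ne']
  have hdC : ∀ x y, d x = 0 → C x y = 0 := by
    intro x y hx
    have h1 : q x = 0 := by rw [hdq, hx]; ring
    have h2 := (Finset.sum_eq_zero_iff_of_nonneg
      (fun y _ => mul_nonneg (hC0 x y) (hω y).le)).1 h1 y (Finset.mem_univ _)
    exact (mul_eq_zero.1 h2).resolve_right (hω y).ne'
  have hdC' : ∀ x y, d y = 0 → C x y = 0 := fun x y hy => by rw [hCs]; exact hdC y x hy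
  have hdb : ∀ x, d x = 0 → b x = 0 := by
    intro x hx
    apply hb
    change q x = 0
    rw [hdq, hx]; ring
  let M : Matrix Y Y ℝ := fun x y => C x y / (d x * d y)
  have hM : M.IsHermitian := by
    ext x y
    change C y x / (d y * d x) = C x y / (d x * d y)
    rw [hCs, mul_comm (d y)]
  let T : EuclideanSpace ℝ Y →ₗ[ℝ] EuclideanSpace ℝ Y := Matrix.toEuclideanLin M
  have hT : T.IsSymmetric := Matrix.isSymmetric_toEuclideanLin_iff.2 hM
  have hTa : ∀ w x, T w x = ∑ y, C x y / (d x * d y) * w y := by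
    intro w x
    rfl
  have hin : ∀ w z : EuclideanSpace ℝ Y, inner ℝ w z = ∑ x, w x * z x := by
    intro w z
    simp [PiLp.inner_apply, mul_comm]
  have hTa' : ∀ w x, T w x = (∑ y, C x y * (w y / d y)) / d x := by
    intro w x
    rw [hTa, Finset.sum_div]
    refine Finset.sum_congr rfl fun y _ => ?_
    rw [div_mul_eq_mul_div, mul_div_assoc', div_div, mul_comm (d x)]
  have key := spec_lemma T hT (WithLp.toLp 2 fun x => d x * ω x) (WithLp.toLp 2 fun x => b x / d x) a
    ?_ ?_ ?_ σ (WithLp.toLp 2 fun x => d x * u x) ?_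
  · refine le_trans (le_of_eq ?_) key
    rw [hin, hin]
    congr 1
    · congr 2
      refine Finset.sum_congr rfl fun x _ => ?_
      by_cases hx : d x = 0
      · simp [hx, hdb x hx]
      · simp only; field_simp
    · refine Finset.sum_congr rfl fun x _ => ?_
      rw [hTa, Finset.mul_sum]
      refine Finset.sum_congr rfl fun y _ => ?_
      by_cases hx : d x = 0
      · simp [hx, hdC x y hx]
      by_cases hy : d y = 0
      · simp [hy, hdC' x y hy]
      simp only; field_simp
  · ext x
    rw [hTa']
    simp only
    by_cases hx : d x = 0
    · simp [hx]
    rw [div_eq_iff hx]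
    have : d x * ω x * d x = q x := by rw [hdq]; ring
    rw [this]
    refine Finset.sum_congr rfl fun y _ => ?_
    by_cases hy : d y = 0
    · simp [hdC' x y hy]
    field_simp
  · intro e l hl he
    have he' : ∀ x, (∑ y, C x y * (e y / d y)) / d x = l * e x := by
      intro x
      rw [← hTa', he]; simp
    have hez : ∀ x, d x = 0 → e x = 0 := by
      intro x hx
      have := he' x
      rw [hx, div_zero] at this
      exact (mul_eq_zero.1 this.symm).resolve_left (by linarith)
    set f : Y → ℝ := fun x => e x / (d x * ω x) with hf
    have hfe : ∀ x, ω x * f x = e x / d x := by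
      intro x
      have := (hω x).ne'
      by_cases hx : d x = 0
      · simp [hf, hx]
      · rw [hf]; simp only; field_simp
    have hen : ∑ x, ∑ y, C x y * ω x * ω y * (f x - f y)^2 ≤ 0 := by
      have e1 : ∑ x, ∑ y, C x y * ω x * ω y * (f x - f y)^2
          = ∑ x, ∑ y, C x y * ω x * ω y * (f x)^2 + ∑ x, ∑ y, C x y * ω x * ω y * (f y)^2
            - 2 * ∑ x, ∑ y, C x y * (ω x * f x) * (ω y * f y) := by
        simp only [Finset.mul_sum, ← Finset.sum_add_distrib, ← Finset.sum_sub_distrib]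
        refine Finset.sum_congr rfl fun x _ => Finset.sum_congr rfl fun y _ => ?_
        ring
      have e2 : ∑ x, ∑ y, C x y * ω x * ω y * (f y)^2 = ∑ x, ∑ y, C x y * ω x * ω y * (f x)^2 := by
        rw [Finset.sum_comm]
        refine Finset.sum_congr rfl fun x _ => Finset.sum_congr rfl fun y _ => ?_
        rw [hCs]; ring
      have e3 : ∑ x, ∑ y, C x y * ω x * ω y * (f x)^2 = ∑ x, (e x)^2 := by
        refine Finset.sum_congr rfl fun x _ => ?_
        have : ∑ y, C x y * ω x * ω y * (f x)^2 = q x * (ω x * f x ^ 2) := by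
          rw [hq]; simp only
          rw [Finset.sum_mul]
          refine Finset.sum_congr rfl fun y _ => ?_
          ring
        rw [this, hdq]
        by_cases hx : d x = 0
        · simp [hx, hez x hx]
        · have h3 : e x = ω x * f x * d x := by rw [hfe]; field_simp
          rw [h3]; ring
      have e4 : ∑ x, ∑ y, C x y * (ω x * f x) * (ω y * f y) = l * ∑ x, (e x)^2 := by
        rw [Finset.mul_sum]
        refine Finset.sum_congr rfl fun x _ => ?_
        have : ∑ y, C x y * (ω x * f x) * (ω y * f y)
            = e x * ((∑ y, C x y * (e y / d y)) / d x) := by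
          rw [Finset.sum_div, Finset.mul_sum]
          refine Finset.sum_congr rfl fun y _ => ?_
          rw [hfe, hfe]; ring
        rw [this, he']; ring
      rw [e1, e2, e3, e4]
      have : 0 ≤ ∑ x, (e x)^2 := Finset.sum_nonneg fun x _ => sq_nonneg _
      nlinarith
    have hnn : ∀ x y, 0 ≤ C x y * ω x * ω y * (f x - f y)^2 := fun x y => by
      have := hC0 x y
      have := hω x
      have := hω y
      positivity
    have hfc : ∀ x y, 0 < C x y → f x = f y := by
      intro x y hxy
      have h0 := le_antisymm hen (Finset.sum_nonneg fun x _ => Finset.sum_nonneg fun y _ => hnn x y)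
      have h1 := (Finset.sum_eq_zero_iff_of_nonneg
        (fun x _ => Finset.sum_nonneg fun y _ => hnn x y)).1 h0 x (Finset.mem_univ _)
      have h2 := (Finset.sum_eq_zero_iff_of_nonneg (fun y _ => hnn x y)).1 h1 y (Finset.mem_univ _)
      have h3 : 0 < C x y * ω x * ω y := by
        have := hω x
        have := hω y
        positivity
      have h4 := (mul_eq_zero.1 h2).resolve_left h3.ne'
      have h5 := pow_eq_zero_iff (two_ne_zero) |>.1 h4
      linarith
    have hco := hconn f hfc
    have hqp : ∀ x, d x ≠ 0 → 0 < q x := by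
      intro x hx
      rw [hdq]
      have := hω x
      positivity
    by_cases hex : ∃ x0, d x0 ≠ 0
    · obtain ⟨x0, hx0⟩ := hex
      refine ⟨f x0, ?_⟩
      ext x
      simp only [PiLp.smul_apply, smul_eq_mul]
      by_cases hx : d x = 0
      · simp [hx, hez x hx]
      · rw [hco x0 x (hqp _ hx0) (hqp _ hx), hf]
        have := (hω x).ne'
        simp only; field_simp
    · push Not at hex
      refine ⟨0, ?_⟩
      ext x
      simp [hez x (hex x)]
  · intro σ u
    have := hineq σ (fun x => u x / d x)
    refine le_trans (le_of_eq ?_) (le_trans this (le_of_eq ?_))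
    · rw [hin, hin]
      congr 1
      · congr 2
        refine Finset.sum_congr rfl fun x _ => ?_
        simp only; ring
      · refine Finset.sum_congr rfl fun x _ => ?_
        rw [hTa, Finset.mul_sum]
        refine Finset.sum_congr rfl fun y _ => ?_
        by_cases hx : d x = 0
        · simp [hx]
        by_cases hy : d y = 0
        · simp [hy]
        field_simp
    · rw [EuclideanSpace.norm_sq_eq]
      refine Finset.sum_congr rfl fun x _ => ?_
      rw [PiLp.add_apply, PiLp.smul_apply, hTa', Real.norm_eq_abs, sq_abs, smul_eq_mul]
      change ω x * _ / q x = _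
      rw [hdq]
      have := (hω x).ne'
      by_cases hx : d x = 0
      · simp [hx]
      simp only
      field_simp
  · rw [hin, hin, ← h]
    congr 1
    · congr 1
      refine Finset.sum_congr rfl fun x _ => ?_
      by_cases hx : d x = 0
      · simp [hx, hdb x hx]
      · simp only; field_simp
    · refine Finset.sum_congr rfl fun x _ => ?_
      have : ∑ y, C x y * u x * ω y = u x * q x := by
        rw [hq]; simp only
        rw [Finset.mul_sum]
        refine Finset.sum_congr rfl fun y _ => ?_
        ring
      rw [this, hdq]
      simp only; ring

theorem orth_lemma {Y : Type*} [Fintype Y] (C : Y → Y → ℝ) (b ω : Y → ℝ) (a : ℝ)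
    (hCs : ∀ x y, C x y = C y x)
    (H : ∀ (σ : ℝ) (u : Y → ℝ), σ * (∑ x, b x * ω x) + ∑ x, ∑ y, C x y * u x * ω y = 0 →
      a * σ^2 + 2 * σ * (∑ x, b x * u x) + ∑ x, ∑ y, C x y * u x * u y ≤ 0)
    (hE : 0 < ∑ x, ∑ y, C x y * ω x * ω y) (σ : ℝ) (u : Y → ℝ) :
    (a * σ^2 + 2 * σ * (∑ x, b x * u x) + ∑ x, ∑ y, C x y * u x * u y)
      * (∑ x, ∑ y, C x y * ω x * ω y) ≤
      (σ * (∑ x, b x * ω x) + ∑ x, ∑ y, C x y * u x * ω y)^2 := by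
  set E := ∑ x, ∑ y, C x y * ω x * ω y with hEd
  set L := σ * (∑ x, b x * ω x) + ∑ x, ∑ y, C x y * u x * ω y with hL
  have e1 : ∑ x, ∑ y, C x y * (E * u x - L * ω x) * ω y
      = E * (∑ x, ∑ y, C x y * u x * ω y) - L * E := by
    conv_rhs => rw [hEd]
    simp only [Finset.mul_sum, ← Finset.sum_sub_distrib]
    refine Finset.sum_congr rfl fun x _ => Finset.sum_congr rfl fun y _ => ?_
    ring
  have e0 : ∑ x, ∑ y, C x y * ω x * u y = ∑ x, ∑ y, C x y * u x * ω y := by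
    rw [Finset.sum_comm]
    refine Finset.sum_congr rfl fun x _ => Finset.sum_congr rfl fun y _ => ?_
    rw [hCs]; ring
  have e2 : ∑ x, ∑ y, C x y * (E * u x - L * ω x) * (E * u y - L * ω y)
      = E^2 * (∑ x, ∑ y, C x y * u x * u y) - E * L * (∑ x, ∑ y, C x y * u x * ω y)
       - E * L * (∑ x, ∑ y, C x y * ω x * u y) + L^2 * ∑ x, ∑ y, C x y * ω x * ω y := by
    simp only [Finset.mul_sum, ← Finset.sum_sub_distrib, ← Finset.sum_add_distrib]
    refine Finset.sum_congr rfl fun x _ => Finset.sum_congr rfl fun y _ => ?_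
    ring
  have e3 : ∑ x, b x * (E * u x - L * ω x) = E * (∑ x, b x * u x) - L * ∑ x, b x * ω x := by
    simp only [Finset.mul_sum, ← Finset.sum_sub_distrib]
    refine Finset.sum_congr rfl fun x _ => ?_
    ring
  have h := H (E * σ) (fun x => E * u x - L * ω x) (by rw [e1]; linear_combination (-E) * hL)
  rw [e2, e3, e0, ← hEd] at h
  set Q := ∑ x, ∑ y, C x y * u x * u y
  set S := ∑ x, ∑ y, C x y * u x * ω y
  have h' : E * ((a * σ^2 + 2 * σ * (∑ x, b x * u x) + Q) * E - L^2) ≤ 0 := by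
    have : L * E * S = L * E * (L - σ * ∑ x, b x * ω x) := by rw [hL]; ring
    linear_combination h + 2 * this
  have := nonpos_of_mul_nonpos_right h' hE
  linarith

theorem base_lemma {Y : Type*} [Fintype Y] (C : Y → Y → ℝ) (b ω : Y → ℝ) (a : ℝ)
    (hCs : ∀ x y, C x y = C y x)
    (hE : 0 < ∑ x, ∑ y, C x y * ω x * ω y)
    (H : ∀ (σ : ℝ) (u : Y → ℝ),
      a * σ^2 + 2 * σ * (∑ x, b x * u x) + ∑ x, ∑ y, C x y * u x * u y
        ≤ (σ + ∑ x, b x * u x)^2) (σ : ℝ) (u : Y → ℝ)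
    (h : σ * (∑ x, b x * ω x) + ∑ x, ∑ y, C x y * u x * ω y = 0) :
    a * σ^2 + 2 * σ * (∑ x, b x * u x) + ∑ x, ∑ y, C x y * u x * u y ≤ 0 := by
  set E := ∑ x, ∑ y, C x y * ω x * ω y with hEd
  set l := ∑ x, b x * ω x with hl
  have hl0 : l ≠ 0 := by
    intro h0
    have := H 0 ω
    rw [← hl, h0] at this
    simp only [← hEd] at this
    nlinarith
  set t := - (σ + ∑ x, b x * u x) / l with ht
  have e0 : ∑ x, ∑ y, C x y * ω x * u y = ∑ x, ∑ y, C x y * u x * ω y := by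
    rw [Finset.sum_comm]
    refine Finset.sum_congr rfl fun x _ => Finset.sum_congr rfl fun y _ => ?_
    rw [hCs]; ring
  have e2 : ∑ x, ∑ y, C x y * (u x + t * ω x) * (u y + t * ω y)
      = (∑ x, ∑ y, C x y * u x * u y) + t * (∑ x, ∑ y, C x y * u x * ω y)
       + t * (∑ x, ∑ y, C x y * ω x * u y) + t^2 * ∑ x, ∑ y, C x y * ω x * ω y := by
    simp only [Finset.mul_sum, ← Finset.sum_add_distrib]
    refine Finset.sum_congr rfl fun x _ => Finset.sum_congr rfl fun y _ => ?_
    ring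
  have e3 : ∑ x, b x * (u x + t * ω x) = (∑ x, b x * u x) + t * l := by
    rw [hl]
    simp only [Finset.mul_sum, ← Finset.sum_add_distrib]
    refine Finset.sum_congr rfl fun x _ => ?_
    ring
  have h3 := H σ (fun x => u x + t * ω x)
  rw [e2, e3, e0, ← hEd] at h3
  have h4 : σ + (∑ x, b x * u x + t * l) = 0 := by
    rw [ht]; field_simp; ring
  rw [h4] at h3
  have : 0 ≤ t^2 * E := mul_nonneg (sq_nonneg _) hE.le
  linear_combination h3 + this - 2 * t * h

/-- A multiset is `good` if it has no repeated elements and is independent. -/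
def mGood (Indep : Finset X → Prop) (s : Multiset X) : Prop := s.Nodup ∧ Indep s.toFinset

/-- Weighted count of ordered continuations of length `r`. -/
def mG (Indep : Finset X → Prop) (ω : X → ℝ) : ℕ → Multiset X → ℝ
  | 0, s => if mGood Indep s then 1 else 0
  | r + 1, s => ∑ x, ω x * mG Indep ω r (x ::ₘ s)

theorem mGood_of_cons {Indep : Finset X → Prop}
    (h_hered : ∀ S T : Finset X, S ⊆ T → Indep T → Indep S) {x : X} {s : Multiset X}
    (h : mGood Indep (x ::ₘ s)) : mGood Indep s := by
  refine ⟨(Multiset.nodup_cons.1 h.1).2, h_hered _ _ ?_ h.2⟩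
  rw [Multiset.toFinset_cons]
  exact Finset.subset_insert _ _

theorem mG_nonneg {Indep : Finset X → Prop} {ω : X → ℝ} (hω : ∀ x, 0 < ω x) (r : ℕ) :
    ∀ s, 0 ≤ mG Indep ω r s := by
  induction r with
  | zero => intro s; simp only [mG]; split_ifs <;> norm_num
  | succ r ih => intro s; exact Finset.sum_nonneg fun x _ => mul_nonneg (hω x).le (ih _)

theorem mG_zero {Indep : Finset X → Prop} {ω : X → ℝ}
    (h_hered : ∀ S T : Finset X, S ⊆ T → Indep T → Indep S) (r : ℕ) :
    ∀ s, ¬ mGood Indep s → mG Indep ω r s = 0 := by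
  induction r with
  | zero => intro s hs; simp [mG, hs]
  | succ r ih =>
    intro s hs
    refine Finset.sum_eq_zero fun x _ => ?_
    rw [ih _ fun h => hs (mGood_of_cons h_hered h), mul_zero]

theorem exists_rk {Indep : Finset X → Prop} (hr : 0 < matroidRk Indep) :
    ∃ T, Indep T ∧ T.card = matroidRk Indep := by
  obtain ⟨T, -, hT⟩ := Finset.exists_mem_eq_sup (Finset.univ : Finset (Finset X))
    Finset.univ_nonempty (fun S : Finset X => if Indep S then S.card else 0)
  change matroidRk Indep = _ at hT
  by_cases h : Indep T
  · refine ⟨T, h, ?_⟩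
    rw [hT, if_pos h]
  · rw [if_neg h] at hT
    omega

theorem mGood_ext {Indep : Finset X → Prop}
    (h_exch : ∀ S T : Finset X, Indep S → Indep T → S.card < T.card →
      ∃ x ∈ T, x ∉ S ∧ Indep (insert x S)) {s : Multiset X} (hs : mGood Indep s)
    (hc : s.card < matroidRk Indep) : ∃ x, mGood Indep (x ::ₘ s) := by
  obtain ⟨T, hT, hTc⟩ := exists_rk (Indep := Indep) (by omega)
  obtain ⟨x, -, hx, hI⟩ := h_exch s.toFinset T hs.2 hT
    (by rw [Multiset.toFinset_card_of_nodup hs.1, hTc]; exact hc)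
  refine ⟨x, Multiset.nodup_cons.2 ⟨by simpa using hx, hs.1⟩, ?_⟩
  rw [Multiset.toFinset_cons]
  exact hI

theorem mG_pos {Indep : Finset X → Prop} {ω : X → ℝ} (hω : ∀ x, 0 < ω x)
    (h_exch : ∀ S T : Finset X, Indep S → Indep T → S.card < T.card →
      ∃ x ∈ T, x ∉ S ∧ Indep (insert x S)) (r : ℕ) :
    ∀ s, mGood Indep s → s.card + r ≤ matroidRk Indep → 0 < mG Indep ω r s := by
  induction r with
  | zero => intro s hs _; simp [mG, hs]
  | succ r ih =>
    intro s hs hc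
    obtain ⟨x, hx⟩ := mGood_ext h_exch hs (by omega)
    exact Finset.sum_pos' (fun x _ => mul_nonneg (hω x).le (mG_nonneg hω _ _))
      ⟨x, Finset.mem_univ _, mul_pos (hω x) (ih _ hx (by rw [Multiset.card_cons]; omega))⟩

/-- If `s+x+z`, `s+y` are independent and `s+x+y` is not, then `s+y+z` is independent. -/
theorem mGood_trans {Indep : Finset X → Prop}
    (h_exch : ∀ S T : Finset X, Indep S → Indep T → S.card < T.card →
      ∃ x ∈ T, x ∉ S ∧ Indep (insert x S)) {s : Multiset X} {x y z : X}
    (hxz : mGood Indep (x ::ₘ z ::ₘ s)) (hy : mGood Indep (y ::ₘ s)) :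
    x = y ∨ mGood Indep (x ::ₘ y ::ₘ s) ∨ mGood Indep (z ::ₘ y ::ₘ s) := by
  obtain ⟨w, hw, hwn, hI⟩ := h_exch _ _ hy.2 hxz.2 (by
    rw [Multiset.toFinset_card_of_nodup hy.1, Multiset.toFinset_card_of_nodup hxz.1]; simp)
  have hg : mGood Indep (w ::ₘ y ::ₘ s) := by
    refine ⟨Multiset.nodup_cons.2 ⟨by rwa [Multiset.mem_toFinset] at hwn, hy.1⟩, ?_⟩
    rw [Multiset.toFinset_cons]
    exact hI
  simp only [Multiset.mem_toFinset, Multiset.mem_cons] at hw hwn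
  rcases hw with rfl | rfl | h
  · exact Or.inr (Or.inl hg)
  · exact Or.inr (Or.inr hg)
  · exact absurd (Or.inr h) hwn

theorem mGood_conn {Indep : Finset X → Prop}
    (h_hered : ∀ S T : Finset X, S ⊆ T → Indep T → Indep S)
    (h_exch : ∀ S T : Finset X, Indep S → Indep T → S.card < T.card →
      ∃ x ∈ T, x ∉ S ∧ Indep (insert x S)) {s : Multiset X}
    (hc : s.card + 1 < matroidRk Indep) (f : X → ℝ)
    (hf : ∀ x y, mGood Indep (x ::ₘ y ::ₘ s) → f x = f y) (x y : X)
    (hx : mGood Indep (x ::ₘ s)) (hy : mGood Indep (y ::ₘ s)) : f x = f y := by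
  obtain ⟨z, hz⟩ := mGood_ext h_exch hx (by simpa using hc)
  rw [Multiset.cons_swap] at hz
  rcases mGood_trans h_exch hz hy with h | h | h
  · rw [h]
  · exact hf _ _ h
  · rw [hf _ _ hz, hf _ _ h]

theorem mG_val {Indep : Finset X → Prop} {ω : X → ℝ}
    (h_hered : ∀ S T : Finset X, S ⊆ T → Indep T → Indep S) (r : ℕ) :
    ∀ S : Finset X, mG Indep ω r S.val = (r.factorial : ℝ) *
      ∑ T ∈ Finset.univ.filter (fun T : Finset X => Indep T ∧ S ⊆ T ∧ T.card = S.card + r),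
        ∏ x ∈ T \ S, ω x := by
  induction r with
  | zero =>
    intro S
    have hfil : Finset.univ.filter (fun T : Finset X => Indep T ∧ S ⊆ T ∧ T.card = S.card + 0)
        = if Indep S then {S} else ∅ := by
      ext T
      simp only [Finset.mem_filter, Finset.mem_univ, true_and, add_zero]
      split_ifs with h
      · rw [Finset.mem_singleton]
        refine ⟨fun ⟨_, h2, h3⟩ => (Finset.eq_of_subset_of_card_le h2 h3.le).symm, ?_⟩
        rintro rfl; exact ⟨h, Finset.Subset.refl _, rfl⟩
      · simp only [Finset.notMem_empty, iff_false]
        exact fun ⟨h1, h2, _⟩ => h (h_hered _ _ h2 h1)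
    rw [hfil]
    have : mGood Indep S.val ↔ Indep S := by
      simp [mGood, S.nodup]
    by_cases h : Indep S
    · simp [mG, this, h]
    · simp [mG, this, h]
  | succ r ih =>
    intro S
    have h1 : ∀ x, ω x * mG Indep ω r (x ::ₘ S.val) = (r.factorial : ℝ) *
      ∑ T ∈ Finset.univ.filter (fun T : Finset X => Indep T ∧ S ⊆ T ∧ T.card = S.card + (r+1)),
        if x ∈ T \ S then ∏ y ∈ T \ S, ω y else 0 := by
      intro x
      by_cases hx : x ∈ S
      · rw [mG_zero h_hered _ _ (fun h => by
          have := (Multiset.nodup_cons.1 h.1).1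
          exact this hx)]
        simp [hx]
      · rw [← Finset.insert_val_of_notMem hx, ih, mul_left_comm, Finset.mul_sum]
        congr 1
        rw [← Finset.sum_filter, Finset.filter_filter]
        refine Finset.sum_congr ?_ ?_
        · ext T
          simp only [Finset.mem_filter, Finset.mem_univ, true_and, Finset.insert_subset_iff,
            Finset.card_insert_of_notMem hx, Finset.mem_sdiff]
          constructor
          · rintro ⟨a, ⟨b, c⟩, d⟩
            exact ⟨⟨a, c, by omega⟩, b, hx⟩
          · rintro ⟨⟨a, c, d⟩, b, -⟩
            exact ⟨a, ⟨b, c⟩, by omega⟩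
        · intro T hT
          simp only [Finset.mem_filter, Finset.mem_univ, true_and] at hT
          have : T \ S = insert x (T \ insert x S) := by
            ext y
            simp only [Finset.mem_sdiff, Finset.mem_insert]
            constructor
            · rintro ⟨a, b⟩
              by_cases h : y = x
              · exact Or.inl h
              · exact Or.inr ⟨a, by tauto⟩
            · rintro (rfl | ⟨a, b⟩)
              · exact ⟨(Finset.mem_sdiff.1 hT.2).1, hx⟩
              · exact ⟨a, by tauto⟩
          rw [this, Finset.prod_insert (by simp)]
    simp only [mG]
    rw [Finset.sum_congr rfl fun x _ => h1 x, ← Finset.mul_sum, Finset.sum_comm,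
      Nat.factorial_succ]
    push_cast
    rw [mul_comm ((r:ℝ)+1), mul_assoc]
    congr 1
    rw [Finset.mul_sum]
    refine Finset.sum_congr rfl fun T hT => ?_
    simp only [Finset.mem_filter, Finset.mem_univ, true_and] at hT
    rw [Finset.sum_ite_mem, Finset.univ_inter, Finset.sum_const,
      Finset.card_sdiff_of_subset hT.2.1, nsmul_eq_mul, hT.2.2]
    congr 1
    simp

theorem mG_empty {Indep : Finset X → Prop} {ω : X → ℝ}
    (h_hered : ∀ S T : Finset X, S ⊆ T → Indep T → Indep S) (r : ℕ) :
    mG Indep ω r 0 = (r.factorial : ℝ) * wNumIndep Indep ω r := by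
  have := mG_val (ω := ω) h_hered r ∅
  simpa [wNumIndep] using this

theorem mG_row (Indep : Finset X → Prop) (ω : X → ℝ) (c : ℝ) (r : ℕ) (x : X) (s : Multiset X) :
    ∑ y, c * mG Indep ω r (x ::ₘ y ::ₘ s) * ω y = c * mG Indep ω (r+1) (x ::ₘ s) := by
  simp only [mG]
  rw [Finset.mul_sum]
  refine Finset.sum_congr rfl fun y _ => ?_
  rw [Multiset.cons_swap]; ring

theorem mG_tot (Indep : Finset X → Prop) (ω : X → ℝ) (c : ℝ) (r : ℕ) (s : Multiset X) :
    ∑ x, ∑ y, c * mG Indep ω r (x ::ₘ y ::ₘ s) * ω x * ω y = c * mG Indep ω (r+2) s := by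
  have : ∀ x, ∑ y, c * mG Indep ω r (x ::ₘ y ::ₘ s) * ω x * ω y =
      c * (ω x * mG Indep ω (r+1) (x ::ₘ s)) := by
    intro x
    rw [mul_left_comm, ← mG_row, Finset.mul_sum]
    refine Finset.sum_congr rfl fun y _ => ?_
    ring
  rw [Finset.sum_congr rfl fun x _ => this x, ← Finset.mul_sum]
  rfl

/-- The inductive hyperbolicity statement. -/
def mHyp (Indep : Finset X → Prop) (ω : X → ℝ) (c : ℝ) (r : ℕ) (s : Multiset X) : Prop :=
  ∀ (σ : ℝ) (u : X → ℝ),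
    σ * (∑ x, mG Indep ω r (x ::ₘ s) * ω x)
      + ∑ x, ∑ y, c * mG Indep ω r (x ::ₘ y ::ₘ s) * u x * ω y = 0 →
    mG Indep ω r s * σ^2 + 2 * σ * (∑ x, mG Indep ω r (x ::ₘ s) * u x)
      + ∑ x, ∑ y, c * mG Indep ω r (x ::ₘ y ::ₘ s) * u x * u y ≤ 0

theorem mHyp_step {Indep : Finset X → Prop}
    (h_hered : ∀ S T : Finset X, S ⊆ T → Indep T → Indep S)
    (h_exch : ∀ S T : Finset X, Indep S → Indep T → S.card < T.card →
      ∃ x ∈ T, x ∉ S ∧ Indep (insert x S)) {ω : X → ℝ} (hω : ∀ x, 0 < ω x)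
    {c : ℝ} (hc : 0 < c) (r : ℕ) (s : Multiset X) (hcard : s.card + r + 3 ≤ matroidRk Indep)
    (IH : ∀ x, mGood Indep (x ::ₘ s) → mHyp Indep ω c r (x ::ₘ s)) :
    mHyp Indep ω c (r+1) s := by
  have hq := fun x => mG_row Indep ω c (r+1) x s
  have hgood : ∀ x, 0 < c * mG Indep ω (r+2) (x ::ₘ s) → mGood Indep (x ::ₘ s) := by
    intro x hx
    by_contra hn
    rw [mG_zero h_hered _ _ hn, mul_zero] at hx
    exact lt_irrefl _ hx
  intro σ u h
  refine abs_lemma (fun x y => c * mG Indep ω (r+1) (x ::ₘ y ::ₘ s))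
    (fun x => mG Indep ω (r+1) (x ::ₘ s)) ω (mG Indep ω (r+1) s) hω ?_ ?_ ?_ ?_ ?_ σ u h
  · intro x y
    simp only [Multiset.cons_swap]
  · intro x y
    exact mul_nonneg hc.le (mG_nonneg hω _ _)
  · intro x hx
    rw [hq] at hx
    apply mG_zero h_hered
    intro hg
    have := mG_pos hω h_exch (r+2) (x ::ₘ s) hg (by rw [Multiset.card_cons]; omega)
    exact (mul_pos hc this).ne' hx
  · intro f hf x y hx hy
    rw [hq] at hx hy
    refine mGood_conn h_hered h_exch (by omega) f (fun x y hxy => hf x y ?_) x y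
      (hgood x hx) (hgood y hy)
    exact mul_pos hc (mG_pos hω h_exch _ _ hxy (by simp only [Multiset.card_cons]; omega))
  · intro σ u
    have hloc : ∀ x, ω x * (mG Indep ω r (x ::ₘ s) * σ^2
          + 2 * σ * (∑ y, mG Indep ω r (y ::ₘ x ::ₘ s) * u y)
          + ∑ y, ∑ z, c * mG Indep ω r (y ::ₘ z ::ₘ x ::ₘ s) * u y * u z)
        ≤ ω x * (σ * mG Indep ω (r+1) (x ::ₘ s)
            + ∑ y, c * mG Indep ω (r+1) (x ::ₘ y ::ₘ s) * u y)^2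
          / (∑ y, c * mG Indep ω (r+1) (x ::ₘ y ::ₘ s) * ω y) := by
      intro x
      rw [hq]
      by_cases hx : mGood Indep (x ::ₘ s)
      · have hE := mG_tot Indep ω c r (x ::ₘ s)
        have hEp : 0 < c * mG Indep ω (r+2) (x ::ₘ s) :=
          mul_pos hc (mG_pos hω h_exch _ _ hx (by rw [Multiset.card_cons]; omega))
        have := orth_lemma (fun y z => c * mG Indep ω r (y ::ₘ z ::ₘ x ::ₘ s))
          (fun y => mG Indep ω r (y ::ₘ x ::ₘ s)) ω (mG Indep ω r (x ::ₘ s))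
          (fun y z => by simp only [Multiset.cons_swap]) (IH x hx) (by rw [hE]; exact hEp) σ u
        rw [hE] at this
        rw [mul_div_assoc]
        refine mul_le_mul_of_nonneg_left ?_ (hω x).le
        rw [le_div_iff₀ hEp]
        refine le_trans this (le_of_eq ?_)
        congr 2
        · congr 1
          simp only [mG]
          refine Finset.sum_congr rfl fun y _ => ?_
          ring
        · refine Finset.sum_congr rfl fun y _ => ?_
          have h1 := mG_row Indep ω c r y (x ::ₘ s)
          rw [Multiset.cons_swap x y, ← h1, Finset.sum_mul]
          refine Finset.sum_congr rfl fun z _ => ?_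
          ring
      · have h2 : ∀ y, ¬ mGood Indep (y ::ₘ x ::ₘ s) := fun y h => hx (mGood_of_cons h_hered h)
        have h3 : ∀ y z, ¬ mGood Indep (y ::ₘ z ::ₘ x ::ₘ s) :=
          fun y z h => h2 z (mGood_of_cons h_hered h)
        simp only [mG_zero h_hered _ _ hx, mG_zero h_hered _ _ (h2 _),
          mG_zero h_hered _ _ (h3 _ _)]
        simp
    refine le_trans (le_of_eq ?_) (Finset.sum_le_sum fun x _ => hloc x)
    simp only [mul_add, Finset.sum_add_distrib]
    congr 1
    · congr 1
      · simp only [mG, Finset.sum_mul]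
        refine Finset.sum_congr rfl fun x _ => ?_
        ring
      · simp only [mG, Finset.mul_sum, Finset.sum_mul]
        rw [Finset.sum_comm]
        refine Finset.sum_congr rfl fun x _ => Finset.sum_congr rfl fun y _ => ?_
        rw [Multiset.cons_swap]; ring
    · simp only [Finset.mul_sum]
      rw [Finset.sum_comm]
      conv_rhs => rw [Finset.sum_comm]
      simp only [mG, Finset.mul_sum, Finset.sum_mul]
      rw [Finset.sum_comm]
      refine Finset.sum_congr rfl fun x _ => ?_
      rw [Finset.sum_comm]
      refine Finset.sum_congr rfl fun z _ => Finset.sum_congr rfl fun y _ => ?_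
      rw [Multiset.cons_swap z x, Multiset.cons_swap z y]; ring

theorem mPar_iff {Indep : Finset X → Prop}
    (h_hered : ∀ S T : Finset X, S ⊆ T → Indep T → Indep S)
    (h_exch : ∀ S T : Finset X, Indep S → Indep T → S.card < T.card →
      ∃ x ∈ T, x ∉ S ∧ Indep (insert x S)) {s : Multiset X} {x y : X}
    (hx : mGood Indep (x ::ₘ s)) (hy : mGood Indep (y ::ₘ s)) :
    mParClass Indep s.toFinset x = mParClass Indep s.toFinset y ↔
      ¬ mGood Indep (x ::ₘ y ::ₘ s) := by
  have hcont : ∀ z, z ∈ mCont Indep s.toFinset ↔ mGood Indep (z ::ₘ s) := by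
    intro z
    have hs := mGood_of_cons h_hered hx
    simp [mCont, mGood, hs.1]
  have hcl : ∀ w, mGood Indep (w ::ₘ s) → ∀ z, z ∈ mParClass Indep s.toFinset w ↔
      mGood Indep (z ::ₘ s) ∧ ¬ mGood Indep (z ::ₘ w ::ₘ s) := by
    intro w hw z
    rw [mParClass, Finset.mem_filter, hcont]
    refine and_congr_right fun hz => ?_
    have h1 := Multiset.nodup_cons.1 hz.1
    have h2 := Multiset.nodup_cons.1 hw.1
    simp only [mGood, Multiset.nodup_cons, Multiset.mem_cons, Multiset.toFinset_cons, h1.1, h2.1,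
      h1.2]
    simp only [or_false, not_false_eq_true, and_true]
    tauto
  have hself : ∀ z, ¬ mGood Indep (z ::ₘ z ::ₘ s) := by
    intro z h
    have := (Multiset.nodup_cons.1 h.1).1
    simp at this
  constructor
  · intro h
    have : x ∈ mParClass Indep s.toFinset y := by
      rw [← h, hcl x hx]
      exact ⟨hx, hself x⟩
    exact ((hcl y hy x).1 this).2
  · intro h
    ext z
    rw [hcl x hx, hcl y hy]
    refine and_congr_right fun hz => not_congr ?_
    constructor
    · intro hzx
      rw [Multiset.cons_swap] at hzx
      rcases mGood_trans h_exch hzx hy with h1 | h1 | h1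
      · rw [h1, Multiset.cons_swap] at hzx; exact hzx
      · exact absurd h1 h
      · exact h1
    · intro hzy
      rw [Multiset.cons_swap] at hzy
      rcases mGood_trans h_exch hzy hx with h1 | h1 | h1
      · rw [h1, Multiset.cons_swap] at hzy; exact hzy
      · rw [Multiset.cons_swap] at h1; exact absurd h1 h
      · exact h1

theorem mCont_iff {Indep : Finset X → Prop} {s : Multiset X} (hs : mGood Indep s) (z : X) :
    z ∈ mCont Indep s.toFinset ↔ mGood Indep (z ::ₘ s) := by
  simp [mCont, mGood, hs.1]

theorem card_le_contNum {Indep : Finset X → Prop} {s : Multiset X} (hs : mGood Indep s) :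
    (mParClasses Indep s.toFinset).card ≤ contNum Indep s.card := by
  unfold contNum
  exact Finset.le_sup (f := fun S => (mParClasses Indep S).card)
    (Finset.mem_filter.2 ⟨Finset.mem_univ _, hs.2, Multiset.toFinset_card_of_nodup hs.1⟩)

theorem two_le_contNum {Indep : Finset X → Prop}
    (h_hered : ∀ S T : Finset X, S ⊆ T → Indep T → Indep S)
    (h_exch : ∀ S T : Finset X, Indep S → Indep T → S.card < T.card →
      ∃ x ∈ T, x ∉ S ∧ Indep (insert x S)) {s : Multiset X} (hs : mGood Indep s)
    (hc : s.card + 2 ≤ matroidRk Indep) : 2 ≤ contNum Indep s.card := by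
  refine le_trans ?_ (card_le_contNum hs)
  obtain ⟨y, hy⟩ := mGood_ext h_exch hs (by omega)
  obtain ⟨x, hxy⟩ := mGood_ext h_exch hy (by rw [Multiset.card_cons]; omega)
  have hx : mGood Indep (x ::ₘ s) := by
    rw [Multiset.cons_swap] at hxy
    exact mGood_of_cons h_hered hxy
  have hne : mParClass Indep s.toFinset x ≠ mParClass Indep s.toFinset y := by
    intro h
    exact (mPar_iff h_hered h_exch hx hy).1 h hxy
  refine Finset.one_lt_card.2 ⟨_, Finset.mem_image_of_mem _ ((mCont_iff hs x).2 hx), _,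
    Finset.mem_image_of_mem _ ((mCont_iff hs y).2 hy), hne⟩

theorem mHyp_base {Indep : Finset X → Prop}
    (h_hered : ∀ S T : Finset X, S ⊆ T → Indep T → Indep S)
    (h_exch : ∀ S T : Finset X, Indep S → Indep T → S.card < T.card →
      ∃ x ∈ T, x ∉ S ∧ Indep (insert x S)) {ω : X → ℝ} (hω : ∀ x, 0 < ω x)
    {p c : ℝ} (hp : 2 ≤ p) (hc : c * (p - 1) = p) (s : Multiset X)
    (hcard : s.card + 2 ≤ matroidRk Indep) (hs : mGood Indep s)
    (hpp : ((mParClasses Indep s.toFinset).card : ℝ) ≤ p) :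
    mHyp Indep ω c 0 s := by
  have hc0 : 0 < c := by
    by_contra h
    nlinarith
  have hE := mG_tot Indep ω c 0 s
  refine base_lemma (fun x y => c * mG Indep ω 0 (x ::ₘ y ::ₘ s))
    (fun x => mG Indep ω 0 (x ::ₘ s)) ω (mG Indep ω 0 s) ?_ ?_ ?_
  · intro x y
    simp only [Multiset.cons_swap]
  · rw [hE]
    exact mul_pos hc0 (mG_pos hω h_exch _ _ hs hcard)
  · intro σ u
    set K := mCont Indep s.toFinset with hK
    set cl := mParClass Indep s.toFinset with hcl
    have e1 : ∑ x, mG Indep ω 0 (x ::ₘ s) * u x = ∑ x ∈ K, u x := by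
      rw [← Finset.sum_filter_add_sum_filter_not Finset.univ (fun x => x ∈ K)]
      rw [Finset.filter_mem_eq_inter, Finset.univ_inter]
      rw [Finset.sum_eq_zero (s := Finset.filter (fun x => x ∉ K) Finset.univ), add_zero]
      · refine Finset.sum_congr rfl fun x hx => ?_
        rw [hK, mCont_iff hs] at hx
        simp [mG, hx]
      · intro x hx
        rw [Finset.mem_filter, hK, mCont_iff hs] at hx
        simp [mG, hx.2]
    have e2 : ∑ x, ∑ y, c * mG Indep ω 0 (x ::ₘ y ::ₘ s) * u x * u y
        = c * ∑ x ∈ K, ∑ y ∈ K, (u x * u y - if cl x = cl y then u x * u y else 0) := by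
      have h0 : ∀ x y, c * mG Indep ω 0 (x ::ₘ y ::ₘ s) * u x * u y = if x ∈ K then
          (if y ∈ K then c * (u x * u y - if cl x = cl y then u x * u y else 0) else 0) else 0 := by
        intro x y
        by_cases hx : x ∈ K
        · by_cases hy : y ∈ K
          · rw [if_pos hx, if_pos hy]
            rw [hK, mCont_iff hs] at hx hy
            by_cases hxy : mGood Indep (x ::ₘ y ::ₘ s)
            · have : ¬ cl x = cl y := fun h => (mPar_iff h_hered h_exch hx hy).1 h hxy
              simp [mG, hxy, this, mul_assoc]
            · have : cl x = cl y := (mPar_iff h_hered h_exch hx hy).2 hxy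
              simp [mG, hxy, this]
          · rw [if_pos hx, if_neg hy]
            rw [hK, mCont_iff hs] at hy
            rw [mG_zero h_hered _ _ fun h => hy (mGood_of_cons h_hered h)]; simp
        · rw [if_neg hx]
          rw [hK, mCont_iff hs] at hx
          rw [Multiset.cons_swap, mG_zero h_hered _ _ fun h => hx (mGood_of_cons h_hered h)]; simp
      simp only [h0]
      rw [Finset.mul_sum]
      rw [← Finset.sum_filter_add_sum_filter_not Finset.univ (fun x => x ∈ K)]
      rw [Finset.filter_mem_eq_inter, Finset.univ_inter]
      rw [Finset.sum_eq_zero (s := Finset.filter (fun x => x ∉ K) Finset.univ), add_zero]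
      · refine Finset.sum_congr rfl fun x hx => ?_
        simp only [if_pos hx]
        rw [Finset.sum_ite_mem, Finset.univ_inter, Finset.mul_sum]
      · intro x hx
        rw [Finset.mem_filter] at hx
        simp [hx.2]
    set R := ∑ P ∈ mParClasses Indep s.toFinset, (∑ x ∈ K with cl x = P, u x)^2 with hR
    have e3 : ∑ x ∈ K, ∑ y ∈ K, (if cl x = cl y then u x * u y else 0) = R := by
      have hmaps : ∀ x ∈ K, cl x ∈ mParClasses Indep s.toFinset :=
        fun x hx => Finset.mem_image_of_mem _ hx
      rw [hR, ← Finset.sum_fiberwise_of_maps_to hmaps]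
      refine Finset.sum_congr rfl fun P _ => ?_
      rw [sq, Finset.sum_mul_sum]
      refine Finset.sum_congr rfl fun x hx => ?_
      rw [Finset.mem_filter] at hx
      rw [Finset.sum_filter]
      refine Finset.sum_congr rfl fun y _ => ?_
      rw [hx.2]
      simp only [eq_comm]
    have e4 : ∑ x ∈ K, ∑ y ∈ K, u x * u y = (∑ x ∈ K, u x)^2 := by
      rw [sq, Finset.sum_mul_sum]
    have e5 : (∑ x ∈ K, u x)^2 ≤ p * R := by
      have hmaps : ∀ x ∈ K, cl x ∈ mParClasses Indep s.toFinset :=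
        fun x hx => Finset.mem_image_of_mem _ hx
      rw [← Finset.sum_fiberwise_of_maps_to hmaps]
      refine le_trans sq_sum_le_card_mul_sum_sq ?_
      exact mul_le_mul_of_nonneg_right hpp (Finset.sum_nonneg fun _ _ => sq_nonneg _)
    rw [e1, e2]
    simp only [Finset.sum_sub_distrib]
    rw [e3, e4]
    have e6 : mG Indep ω 0 s = 1 := by simp [mG, hs]
    rw [e6]
    set A := (∑ x ∈ K, u x)
    have : c * (A^2 - R) ≤ A^2 := by
      have h1 : (c - 1) * (p - 1) = 1 := by linarith
      have h2 : 0 ≤ c - 1 := by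
        by_contra h
        nlinarith
      have h3 : (c - 1) * A^2 ≤ (c-1) * (p * R) := mul_le_mul_of_nonneg_left e5 h2
      have h4 : (c - 1) * p = c := by linarith
      rw [← mul_assoc, h4] at h3
      linarith
    linarith

theorem mHyp_all {Indep : Finset X → Prop}
    (h_hered : ∀ S T : Finset X, S ⊆ T → Indep T → Indep S)
    (h_exch : ∀ S T : Finset X, Indep S → Indep T → S.card < T.card →
      ∃ x ∈ T, x ∉ S ∧ Indep (insert x S)) {ω : X → ℝ} (hω : ∀ x, 0 < ω x)
    {k : ℕ} {c : ℝ} (hk2 : k + 2 ≤ matroidRk Indep) (hp : 2 ≤ contNum Indep k)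
    (hc : c * ((contNum Indep k : ℝ) - 1) = contNum Indep k) (r : ℕ) :
    ∀ s : Multiset X, mGood Indep s → s.card + r = k → mHyp Indep ω c r s := by
  have hp' : (2:ℝ) ≤ contNum Indep k := by exact_mod_cast hp
  have hc0 : 0 < c := by
    by_contra h
    nlinarith
  induction r with
  | zero =>
    intro s hs hk
    refine mHyp_base h_hered h_exch hω hp' hc s (by omega) hs ?_
    have := card_le_contNum hs
    rw [show s.card = k by omega] at this
    exact_mod_cast this
  | succ r ih =>
    intro s hs hk
    refine mHyp_step h_hered h_exch hω hc0 r s (by omega) fun x hx => ih _ hx ?_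
    rw [Multiset.card_cons]; omega

/-- **Refined weighted log-concavity for matroids.** -/
theorem matroid_refined_weighted_log_concavity
    (Indep : Finset X → Prop)
    (h_ne : ∃ S : Finset X, Indep S)
    (h_hered : ∀ S T : Finset X, S ⊆ T → Indep T → Indep S)
    (h_exch : ∀ S T : Finset X, Indep S → Indep T → S.card < T.card →
      ∃ x ∈ T, x ∉ S ∧ Indep (insert x S))
    (ω : X → ℝ) (hω : ∀ x, 0 < ω x)
    (k : ℕ) (hk1 : 1 ≤ k) (hk2 : k < matroidRk Indep) :
    ((1 : ℝ) + 1 / (k : ℝ)) * (1 + 1 / ((contNum Indep (k - 1) : ℝ) - 1)) *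
        wNumIndep Indep ω (k - 1) * wNumIndep Indep ω (k + 1) ≤
      (wNumIndep Indep ω k) ^ 2 := by
  obtain ⟨k, rfl⟩ : ∃ m, k = m + 1 := ⟨k - 1, by omega⟩
  rw [Nat.add_sub_cancel]
  have h0 : mGood Indep 0 := by
    obtain ⟨S, hS⟩ := h_ne
    exact ⟨Multiset.nodup_zero, h_hered _ _ (by simp) hS⟩
  have hp : 2 ≤ contNum Indep k := by
    have hT : ∀ j, j ≤ k → ∃ s : Multiset X, mGood Indep s ∧ s.card = j := by
      intro j
      induction j with
      | zero => intro _; exact ⟨0, h0, rfl⟩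
      | succ j ih =>
        intro hj
        obtain ⟨s, hs, hsc⟩ := ih (by omega)
        obtain ⟨x, hx⟩ := mGood_ext h_exch hs (by omega)
        exact ⟨_, hx, by rw [Multiset.card_cons, hsc]⟩
    obtain ⟨s, hs, hsc⟩ := hT k le_rfl
    have := two_le_contNum h_hered h_exch hs (by omega)
    rwa [hsc] at this
  have hp' : (2:ℝ) ≤ contNum Indep k := by exact_mod_cast hp
  set p : ℝ := (contNum Indep k : ℝ) with hpd
  set c : ℝ := 1 + 1 / (p - 1) with hcd
  have hc : c * (p - 1) = p := by
    have : p - 1 ≠ 0 := by linarith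
    rw [hcd]; field_simp; ring
  have hc0 : 0 < c := by
    by_contra h
    nlinarith
  have hyp := mHyp_all h_hered h_exch hω (k := k) (c := c) (by omega) hp hc k 0 h0 (by simp)
  have hE := mG_tot Indep ω c k 0
  have hEp : 0 < c * mG Indep ω (k+2) 0 :=
    mul_pos hc0 (mG_pos hω h_exch _ _ h0 (by simp; omega))
  have main := orth_lemma (fun y z => c * mG Indep ω k (y ::ₘ z ::ₘ 0))
    (fun y => mG Indep ω k (y ::ₘ 0)) ω (mG Indep ω k 0)
    (fun y z => by simp only [Multiset.cons_swap]) hyp (by rw [hE]; exact hEp) 1 (fun _ => 0)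
  rw [hE] at main
  have hb : ∑ x, mG Indep ω k (x ::ₘ 0) * ω x = mG Indep ω (k+1) 0 := by
    simp only [mG]
    exact Finset.sum_congr rfl fun x _ => mul_comm _ _
  rw [hb] at main
  simp only [mul_zero, zero_mul, Finset.sum_const_zero, add_zero, one_pow, mul_one, one_mul] at main
  rw [mG_empty h_hered, mG_empty h_hered, mG_empty h_hered] at main
  rw [Nat.factorial_succ (k+1), Nat.factorial_succ k] at main
  set a0 := wNumIndep Indep ω k
  set a1 := wNumIndep Indep ω (k+1)
  set a2 := wNumIndep Indep ω (k+2)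
  push_cast at main ⊢
  have hf : (0:ℝ) < (k.factorial : ℝ) := by exact_mod_cast Nat.factorial_pos k
  set f := (k.factorial : ℝ)
  have hk : (0:ℝ) < (k:ℝ) + 1 := by positivity
  have hF : 0 < (f * ((k:ℝ)+1))^2 := by positivity
  have e1 : (1 + 1 / ((k:ℝ) + 1)) * c * a0 * a2 * (f * ((k:ℝ)+1))^2
      = f * a0 * (c * (((k:ℝ) + 1 + 1) * (((k:ℝ) + 1) * f) * a2)) := by
    field_simp
  refine le_of_mul_le_mul_right ?_ hF
  rw [e1]
  refine le_trans main (le_of_eq ?_)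
  ring
end
end

section
/- Let M = (X, I) be a matroid on |X| = n elements and let k be an integer with 1 ≤ k < rk(M). Then I(k)² = (1 + 1/k)·(1 + 1/(n − k))·I(k−1)·I(k+1) if and only if every subset of X of size k+1 is independent (equivalently, girth(M) > k+1). -/
open scoped Classical BigOperators

noncomputable section

variable {X : Type*} [Fintype X] [DecidableEq X]

/-- bilinear form of a matrix -/
def bil {Y : Type*} [Fintype Y] (A : Y → Y → ℝ) (u v : Y → ℝ) : ℝ :=
  ∑ i, ∑ j, u i * v j * A i j

/-- hyperbolicity at `v` -/
def Hyp {Y : Type*} [Fintype Y] (A : Y → Y → ℝ) (v : Y → ℝ) : Prop :=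
  ∀ u : Y → ℝ, bil A u u * bil A v v ≤ (bil A u v) ^ 2

theorem bil_symm {Y : Type*} [Fintype Y] (A : Y → Y → ℝ) (hA : ∀ i j, A i j = A j i)
    (u v : Y → ℝ) : bil A u v = bil A v u := by
  unfold bil
  rw [Finset.sum_comm]
  refine Finset.sum_congr rfl fun i _ => Finset.sum_congr rfl fun j _ => ?_
  rw [hA j i]; ring

theorem bil_add_smul {Y : Type*} [Fintype Y] (A : Y → Y → ℝ)
    (u v z : Y → ℝ) (r : ℝ) :
    bil A (fun i => u i + r * v i) z = bil A u z + r * bil A v z := by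
  unfold bil
  simp only [Finset.mul_sum, ← Finset.sum_add_distrib]
  refine Finset.sum_congr rfl fun i _ => Finset.sum_congr rfl fun j _ => ?_
  ring

theorem bil_quad {Y : Type*} [Fintype Y] (A : Y → Y → ℝ) (hA : ∀ i j, A i j = A j i)
    (u v : Y → ℝ) (r : ℝ) :
    bil A (fun i => u i + r * v i) (fun i => u i + r * v i)
      = bil A u u + 2 * r * bil A u v + r ^ 2 * bil A v v := by
  rw [bil_add_smul, bil_symm A hA u, bil_symm A hA v, bil_add_smul, bil_add_smul,
    bil_symm A hA v u]
  ring

theorem hyp_of_exists {Y : Type*} [Fintype Y] (A : Y → Y → ℝ) (hA : ∀ i j, A i j = A j i)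
    (v : Y → ℝ) (hv : 0 ≤ bil A v v)
    (h : ∀ u : Y → ℝ, ∃ r : ℝ, bil A (fun i => u i + r * v i) (fun i => u i + r * v i) ≤ 0) :
    Hyp A v := by
  intro u
  obtain ⟨r, hr⟩ := h u
  rw [bil_quad A hA] at hr
  nlinarith [sq_nonneg (bil A u v + r * bil A v v), mul_le_mul_of_nonneg_right hr hv]

theorem bil_nonneg {Y : Type*} [Fintype Y] (A : Y → Y → ℝ) (hA : ∀ i j, 0 ≤ A i j)
    (v : Y → ℝ) (hv : ∀ i, 0 ≤ v i) : 0 ≤ bil A v v :=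
  Finset.sum_nonneg fun i _ => Finset.sum_nonneg fun j _ =>
    mul_nonneg (mul_nonneg (hv i) (hv j)) (hA i j)

theorem spectral_real {Y : Type*} [Fintype Y] [DecidableEq Y] (M : Y → Y → ℝ)
    (hM : ∀ i j, M i j = M j i) :
    ∃ (lam : Y → ℝ) (b : Y → Y → ℝ), (∀ l i, ∑ j, M i j * b l j = lam l * b l i) ∧
      (∀ l, ∑ i, b l i ^ 2 = 1) ∧
      (∀ x : Y → ℝ, bil M x x = ∑ l, lam l * (∑ i, b l i * x i) ^ 2) := by
  have hH : (Matrix.of M).IsHermitian := by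
    ext i j; simp [hM j i]
  set B := hH.eigenvectorBasis with hB
  have h1 : ∀ l i, ∑ j, M i j * B l j = hH.eigenvalues l * B l i := by
    intro l i
    have := congrFun (hH.mulVec_eigenvectorBasis l) i
    simpa [Matrix.mulVec, dotProduct] using this
  refine ⟨hH.eigenvalues, fun l i => B l i, h1, ?_, ?_⟩
  · intro l
    have := B.orthonormal.1 l
    rw [EuclideanSpace.norm_eq] at this
    have h2 := (Real.sqrt_eq_one).1 this
    simpa using h2
  · intro x
    have key := B.sum_inner_mul_inner (WithLp.toLp 2 x)
      (WithLp.toLp 2 (fun i => ∑ j, M i j * x j))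
    have e1 : ∀ l, inner ℝ (WithLp.toLp 2 x) (B l) = ∑ i, B l i * x i := by
      intro l
      simp [PiLp.inner_apply]
    have e2 : ∀ l, inner ℝ (B l) (WithLp.toLp 2 (fun i => ∑ j, M i j * x j))
        = hH.eigenvalues l * ∑ i, B l i * x i := by
      intro l
      simp only [PiLp.inner_apply, RCLike.inner_apply, conj_trivial]
      simp only [Finset.sum_mul, Finset.mul_sum]
      rw [Finset.sum_comm]
      refine Finset.sum_congr rfl fun i _ => ?_
      have := h1 l i
      calc ∑ j, M j i * x i * B l j = (∑ j, M i j * B l j) * x i := by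
            rw [Finset.sum_mul]; refine Finset.sum_congr rfl fun j _ => ?_
            rw [hM j i]; ring
        _ = _ := by rw [this]; ring
    have e3 : inner ℝ (WithLp.toLp 2 x) (WithLp.toLp 2 (fun i => ∑ j, M i j * x j))
        = bil M x x := by
      simp only [PiLp.inner_apply, RCLike.inner_apply, conj_trivial, bil, Finset.sum_mul]
      refine Finset.sum_congr rfl fun i _ => Finset.sum_congr rfl fun j _ => ?_
      ring
    rw [← e3, ← key]
    refine Finset.sum_congr rfl fun l _ => ?_
    rw [e1, e2]; ring

theorem hyp_of_bochner {Y : Type*} [Fintype Y] [DecidableEq Y] (A : Y → Y → ℝ)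
    (hA : ∀ i j, A i j = A j i) (hA0 : ∀ i j, 0 ≤ A i j) (v : Y → ℝ) (hv : ∀ i, 0 < v i)
    (w : Y) (hw : ∀ i, 0 < ∑ j, A i j * v j → 0 < A i w)
    (hB : ∀ u : Y → ℝ, bil A u u ≤ ∑ y, v y * ((∑ j, A y j * u j) ^ 2 / (∑ j, A y j * v j))) :
    Hyp A v := by
  set r : Y → ℝ := fun i => ∑ j, A i j * v j with hr
  have hr0 : ∀ i, 0 ≤ r i := fun i => Finset.sum_nonneg fun j _ => mul_nonneg (hA0 i j) (hv j).le
  have hrz : ∀ i, r i = 0 → ∀ j, A i j = 0 := by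
    intro i hi j
    have := (Finset.sum_eq_zero_iff_of_nonneg
      (fun j _ => mul_nonneg (hA0 i j) (hv j).le)).1 hi j (Finset.mem_univ _)
    exact (mul_eq_zero.1 this).resolve_right (hv j).ne'
  set d : Y → ℝ := fun i => Real.sqrt (r i / v i) with hd
  have hd2 : ∀ i, d i ^ 2 * v i = r i := by
    intro i
    rw [hd]; simp only
    rw [Real.sq_sqrt (div_nonneg (hr0 i) (hv i).le)]
    exact div_mul_cancel₀ _ (hv i).ne'
  have hdz : ∀ i, d i = 0 → r i = 0 := by
    intro i hi; rw [← hd2, hi]; ring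
  have hdA : ∀ i, d i = 0 → ∀ j, A i j = 0 := fun i hi => hrz i (hdz i hi)
  have hdr : ∀ i, d i ≠ 0 → 0 < r i := by
    intro i hi; rw [← hd2]; have := hv i; positivity
  obtain ⟨lam, b, hb1, hb2, hb3⟩ := spectral_real (fun i j => A i j / (d i * d j))
    (fun i j => by rw [hA i j, mul_comm (d i)])
  have hdi : ∀ i j, d i * (A i j / (d i * d j)) * d j = A i j := by
    intro i j
    by_cases h1 : d i = 0
    · simp [hdA i h1 j]
    by_cases h2 : d j = 0
    · simp [hA i j, hdA j h2 i]
    field_simp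
  -- eigenvectors
  have hlam : ∀ l, lam l ≤ 0 ∨ ∃ c, ∀ i, b l i = c * (d i * v i) := by
    intro l
    by_contra hcon
    push Not at hcon
    obtain ⟨hl0, hcon⟩ := hcon
    set u : Y → ℝ := fun i => b l i / d i with hu
    have hAu : ∀ i, ∑ j, A i j * u j = lam l * d i * b l i := by
      intro i
      calc ∑ j, A i j * u j = ∑ j, d i * (A i j / (d i * d j) * b l j) := by
            refine Finset.sum_congr rfl fun j _ => ?_
            by_cases h1 : d i = 0
            · simp [hdA i h1 j]
            by_cases h2 : d j = 0
            · simp [hA i j, hdA j h2 i]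
            rw [hu]; field_simp
        _ = _ := by rw [← Finset.mul_sum, hb1 l i]; ring
    have hbz : ∀ i, d i = 0 → b l i = 0 := by
      intro i hi
      have := hb1 l i
      simp only [hi, zero_mul, div_zero, Finset.sum_const_zero] at this
      exact (mul_eq_zero.1 this.symm).resolve_left hl0.ne'
    have hud : ∀ i, u i * d i = b l i := by
      intro i
      by_cases h1 : d i = 0
      · rw [h1, hbz i h1]; ring
      rw [hu]; field_simp
    have huAu : bil A u u = lam l := by
      calc bil A u u = ∑ i, u i * ∑ j, A i j * u j := by
            unfold bil
            simp only [Finset.mul_sum]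
            refine Finset.sum_congr rfl fun i _ => Finset.sum_congr rfl fun j _ => ?_
            ring
        _ = ∑ i, lam l * b l i ^ 2 := by
            refine Finset.sum_congr rfl fun i _ => ?_
            rw [hAu, ← hud i]; ring
        _ = lam l := by rw [← Finset.mul_sum, hb2]; ring
    have hle : lam l ≤ lam l ^ 2 := by
      calc lam l = bil A u u := huAu.symm
        _ ≤ _ := hB u
        _ = ∑ y, lam l ^ 2 * b l y ^ 2 := by
            refine Finset.sum_congr rfl fun i _ => ?_
            rw [hAu]
            by_cases h1 : d i = 0
            · rw [h1, hbz i h1]; ring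
            change v i * ((lam l * d i * b l i) ^ 2 / r i) = _
            have h2 := hdr i h1
            have h3 := hd2 i
            rw [← h3] at h2 ⊢
            have := hv i
            field_simp
        _ = lam l ^ 2 := by rw [← Finset.mul_sum, hb2]; ring
    have hl1 : 1 ≤ lam l := by nlinarith
    have hsum : ∑ i, ∑ j, A i j * v i * v j * (u i / v i - u j / v j) ^ 2 = 2 - 2 * lam l := by
      have s1 : ∑ i, ∑ j, A i j * v j * (u i ^ 2 / v i) = 1 := by
        rw [← hb2 l]
        refine Finset.sum_congr rfl fun i _ => ?_
        rw [← Finset.sum_mul]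
        change r i * _ = _
        rw [← hd2, ← hud]
        have := (hv i).ne'
        field_simp
      have s2 : ∑ i, ∑ j, A i j * v i * (u j ^ 2 / v j) = 1 := by
        rw [Finset.sum_comm, ← s1]
        refine Finset.sum_congr rfl fun i _ => Finset.sum_congr rfl fun j _ => ?_
        rw [hA j i]
      have s3 : ∑ i, ∑ j, A i j * v i * v j * (u i / v i - u j / v j) ^ 2
          = (∑ i, ∑ j, A i j * v j * (u i ^ 2 / v i)) + (∑ i, ∑ j, A i j * v i * (u j ^ 2 / v j))
            - 2 * bil A u u := by
        unfold bil
        simp only [Finset.mul_sum, ← Finset.sum_add_distrib, ← Finset.sum_sub_distrib]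
        refine Finset.sum_congr rfl fun i _ => Finset.sum_congr rfl fun j _ => ?_
        have := (hv i).ne'
        have := (hv j).ne'
        field_simp
        ring
      rw [s3, s1, s2, huAu]; ring
    have hnn : ∀ i j, 0 ≤ A i j * v i * v j * (u i / v i - u j / v j) ^ 2 := fun i j =>
      mul_nonneg (mul_nonneg (mul_nonneg (hA0 i j) (hv i).le) (hv j).le) (sq_nonneg _)
    have hz : ∀ i, A i w * v i * v w * (u i / v i - u w / v w) ^ 2 ≤ 0 := by
      intro i
      calc A i w * v i * v w * (u i / v i - u w / v w) ^ 2
          ≤ ∑ j, A i j * v i * v j * (u i / v i - u j / v j) ^ 2 :=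
            Finset.single_le_sum (f := fun j => A i j * v i * v j * (u i / v i - u j / v j) ^ 2)
              (fun j _ => hnn i j) (Finset.mem_univ w)
        _ ≤ ∑ i, ∑ j, A i j * v i * v j * (u i / v i - u j / v j) ^ 2 :=
            Finset.single_le_sum
              (f := fun i => ∑ j, A i j * v i * v j * (u i / v i - u j / v j) ^ 2)
              (fun i _ => Finset.sum_nonneg fun j _ => hnn i j) (Finset.mem_univ i)
        _ ≤ 0 := by rw [hsum]; linarith
    obtain ⟨i, hi⟩ := hcon (u w / v w)
    apply hi
    by_cases h1 : d i = 0
    · rw [h1, hbz i h1]; ring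
    have h2 : 0 < A i w * v i * v w := mul_pos (mul_pos (hw i (hdr i h1)) (hv i)) (hv w)
    have h3 : (u i / v i - u w / v w) ^ 2 = 0 := by
      refine le_antisymm ?_ (sq_nonneg _)
      by_contra h
      push Not at h
      have := mul_pos h2 h
      linarith [hz i]
    have h4 : u i / v i = u w / v w := by
      have := pow_eq_zero_iff (two_ne_zero) |>.1 h3
      linarith
    rw [← h4, ← hud i]
    have := (hv i).ne'
    field_simp
  -- conclusion
  have hvv := bil_nonneg A hA0 v (fun i => (hv i).le)
  rcases hvv.eq_or_lt with h0 | hpos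
  · intro u; rw [← h0, mul_zero]; exact sq_nonneg _
  apply hyp_of_exists A hA v hvv
  intro u
  refine ⟨-(bil A u v / bil A v v), ?_⟩
  set z : Y → ℝ := fun i => u i + -(bil A u v / bil A v v) * v i with hz
  have hzv : bil A z v = 0 := by
    rw [hz, bil_add_smul]; field_simp; ring
  have e1 : bil A z z = bil (fun i j => A i j / (d i * d j)) (fun i => d i * z i)
      (fun i => d i * z i) := by
    unfold bil
    refine Finset.sum_congr rfl fun i _ => Finset.sum_congr rfl fun j _ => ?_
    rw [← hdi i j]
    simp only [hdi i j]
    conv_lhs => rw [← hdi i j]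
    ring
  rw [e1, hb3]
  apply Finset.sum_nonpos
  intro l _
  rcases hlam l with h | ⟨c, hc⟩
  · exact mul_nonpos_of_nonpos_of_nonneg h (sq_nonneg _)
  · have : ∑ i, b l i * (d i * z i) = 0 := by
      calc ∑ i, b l i * (d i * z i) = c * ∑ i, z i * r i := by
            rw [Finset.mul_sum]
            refine Finset.sum_congr rfl fun i _ => ?_
            rw [hc, ← hd2]; ring
        _ = c * bil A z v := by
            congr 1
            unfold bil
            refine Finset.sum_congr rfl fun i _ => ?_
            rw [hr, Finset.mul_sum]
            refine Finset.sum_congr rfl fun j _ => ?_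
            ring
        _ = 0 := by rw [hzv, mul_zero]
    rw [this]; simp

/-- iterated directional derivative -/
def psi {Y : Type*} [Fintype Y] (φ : Multiset Y → ℝ) (v : Y → ℝ) : ℕ → Multiset Y → ℝ
  | 0, s => φ s
  | m + 1, s => ∑ y, v y * psi φ v m (y ::ₘ s)

/-- the quadratic form at `s` -/
def Qf {Y : Type*} [Fintype Y] (φ : Multiset Y → ℝ) (v : Y → ℝ) (m : ℕ) (s : Multiset Y)
    (i j : Y) : ℝ := psi φ v m (i ::ₘ j ::ₘ s)

theorem Qf_symm {Y : Type*} [Fintype Y] (φ : Multiset Y → ℝ) (v : Y → ℝ) (m : ℕ)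
    (s : Multiset Y) (i j : Y) : Qf φ v m s i j = Qf φ v m s j i := by
  unfold Qf; rw [Multiset.cons_swap]

theorem Qf_succ {Y : Type*} [Fintype Y] (φ : Multiset Y → ℝ) (v : Y → ℝ) (m : ℕ)
    (s : Multiset Y) (i j : Y) :
    Qf φ v (m + 1) s i j = ∑ y, v y * Qf φ v m (y ::ₘ s) i j := by
  unfold Qf
  rw [psi]
  refine Finset.sum_congr rfl fun y _ => ?_
  rw [Multiset.cons_swap y i, Multiset.cons_swap y j]

theorem bil_Qf_cons {Y : Type*} [Fintype Y] (φ : Multiset Y → ℝ) (v : Y → ℝ) (m : ℕ)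
    (s : Multiset Y) (y : Y) (u : Y → ℝ) :
    bil (Qf φ v m (y ::ₘ s)) u v = ∑ j, Qf φ v (m + 1) s y j * u j := by
  unfold bil Qf
  refine Finset.sum_congr rfl fun i _ => ?_
  rw [psi, Finset.sum_mul]
  refine Finset.sum_congr rfl fun j _ => ?_
  rw [Multiset.cons_swap i j, Multiset.cons_swap i y]; ring

theorem row_Qf {Y : Type*} [Fintype Y] (φ : Multiset Y → ℝ) (v : Y → ℝ) (m : ℕ)
    (s : Multiset Y) (y : Y) :
    ∑ j, Qf φ v m s y j * v j = psi φ v (m + 1) (y ::ₘ s) := by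
  unfold Qf
  rw [psi]
  refine Finset.sum_congr rfl fun j _ => ?_
  rw [Multiset.cons_swap, mul_comm]

theorem bil_row {Y : Type*} [Fintype Y] (A : Y → Y → ℝ) (u v : Y → ℝ) :
    bil A u v = ∑ i, u i * ∑ j, A i j * v j := by
  unfold bil
  simp only [Finset.mul_sum]
  refine Finset.sum_congr rfl fun i _ => Finset.sum_congr rfl fun j _ => ?_
  ring

theorem bil_Qf_vv {Y : Type*} [Fintype Y] (φ : Multiset Y → ℝ) (v : Y → ℝ) (m : ℕ)
    (s : Multiset Y) : bil (Qf φ v m s) v v = psi φ v (m + 2) s := by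
  rw [bil_row, psi]
  refine Finset.sum_congr rfl fun i _ => ?_
  rw [row_Qf]

theorem bil_Qf_succ {Y : Type*} [Fintype Y] (φ : Multiset Y → ℝ) (v : Y → ℝ) (m : ℕ)
    (s : Multiset Y) (u z : Y → ℝ) :
    bil (Qf φ v (m + 1) s) u z = ∑ y, v y * bil (Qf φ v m (y ::ₘ s)) u z := by
  unfold bil
  simp only [Qf_succ, Finset.mul_sum]
  have : ∀ i : Y, ∑ j, ∑ y, u i * z j * (v y * Qf φ v m (y ::ₘ s) i j)
      = ∑ y, ∑ j, v y * (u i * z j * Qf φ v m (y ::ₘ s) i j) := by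
    intro i
    rw [Finset.sum_comm]
    refine Finset.sum_congr rfl fun i _ => Finset.sum_congr rfl fun j _ => ?_
    ring
  simp only [this]
  rw [Finset.sum_comm]

theorem psi_nonneg {Y : Type*} [Fintype Y] (φ : Multiset Y → ℝ) (hφ : ∀ s, 0 ≤ φ s)
    (v : Y → ℝ) (hv : ∀ i, 0 ≤ v i) (m : ℕ) : ∀ s, 0 ≤ psi φ v m s := by
  induction m with
  | zero => exact hφ
  | succ m ih => exact fun s => Finset.sum_nonneg fun y _ => mul_nonneg (hv y) (ih _)

theorem psi_zero {Y : Type*} [Fintype Y] (φ : Multiset Y → ℝ)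
    (h0 : ∀ s y, φ s = 0 → φ (y ::ₘ s) = 0)
    (v : Y → ℝ) (m : ℕ) : ∀ s, φ s = 0 → psi φ v m s = 0 := by
  induction m with
  | zero => exact fun s h => h
  | succ m ih =>
    intro s hs
    exact Finset.sum_eq_zero fun y _ => by rw [ih _ (h0 s y hs), mul_zero]

theorem psi_pos {Y : Type*} [Fintype Y] (φ : Multiset Y → ℝ) (hφ : ∀ s, 0 ≤ φ s)
    (w : Y) (hw : ∀ s, φ (w ::ₘ s) = φ s)
    (v : Y → ℝ) (hv : ∀ i, 0 < v i) (m : ℕ) : ∀ s, 0 < φ s → 0 < psi φ v m s := by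
  induction m with
  | zero => exact fun s h => h
  | succ m ih =>
    intro s hs
    refine Finset.sum_pos' (fun y _ => mul_nonneg (hv y).le
      (psi_nonneg φ hφ v (fun i => (hv i).le) m _)) ⟨w, Finset.mem_univ _, ?_⟩
    exact mul_pos (hv w) (ih _ (by rw [hw]; exact hs))

theorem hyp_all {Y : Type*} [Fintype Y] [DecidableEq Y] (φ : Multiset Y → ℝ)
    (hφ : ∀ s, 0 ≤ φ s) (h0 : ∀ s y, φ s = 0 → φ (y ::ₘ s) = 0)
    (w : Y) (hw : ∀ s, φ (w ::ₘ s) = φ s)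
    (v : Y → ℝ) (hv : ∀ i, 0 < v i) (N : ℕ)
    (hbase : ∀ s : Multiset Y, s.card + 2 ≤ N → Hyp (Qf φ v 0 s) v) (m : ℕ) :
    ∀ s : Multiset Y, s.card + m + 2 ≤ N → Hyp (Qf φ v m s) v := by
  have hv0 : ∀ i, 0 ≤ v i := fun i => (hv i).le
  induction m with
  | zero => exact fun s h => hbase s (by omega)
  | succ m ih =>
    intro s hs
    apply hyp_of_bochner _ (Qf_symm φ v _ s) (fun i j => psi_nonneg φ hφ v hv0 _ _) v hv w
    · intro i hi
      rw [row_Qf] at hi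
      apply psi_pos φ hφ w hw v hv
      rw [Multiset.cons_swap, hw]
      refine lt_of_le_of_ne (hφ _) fun h => ?_
      rw [psi_zero φ h0 v _ _ h.symm] at hi
      exact lt_irrefl _ hi
    · intro u
      rw [bil_Qf_succ]
      refine Finset.sum_le_sum fun y _ => mul_le_mul_of_nonneg_left ?_ (hv0 y)
      have h1 := ih (y ::ₘ s) (by rw [Multiset.card_cons]; omega) u
      rw [← bil_Qf_cons, ← bil_Qf_cons]
      have h2 : 0 ≤ bil (Qf φ v m (y ::ₘ s)) v v := bil_nonneg _ (fun i j =>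
        psi_nonneg φ hφ v hv0 _ _) v hv0
      rcases h2.eq_or_lt with h3 | h3
      · have h4 : φ (y ::ₘ s) = 0 := by
          by_contra h
          have := psi_pos φ hφ w hw v hv (m + 2) _ (lt_of_le_of_ne (hφ _) (Ne.symm h))
          rw [← bil_Qf_vv] at this
          linarith
        have h5 : bil (Qf φ v m (y ::ₘ s)) u u = 0 := by
          refine Finset.sum_eq_zero fun i _ => Finset.sum_eq_zero fun j _ => ?_
          unfold Qf
          rw [psi_zero φ h0 v _ _ (h0 _ _ (h0 _ _ h4)), mul_zero]
        rw [h5]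
        positivity
      · rw [le_div_iff₀ h3]; exact h1

theorem psi_continuous {Y Z : Type*} [Fintype Y] [TopologicalSpace Z] (φ : Multiset Y → ℝ)
    (v : Z → Y → ℝ) (hv : ∀ i, Continuous fun e => v e i) (m : ℕ) :
    ∀ s, Continuous fun e => psi φ (v e) m s := by
  induction m with
  | zero => intro s; exact continuous_const
  | succ m ih =>
    intro s
    exact continuous_finsetSum _ fun y _ => (hv y).mul (ih _)

theorem hyp_limit {Y : Type*} [Fintype Y] (φ : Multiset Y → ℝ) (v : ℝ → Y → ℝ)
    (hv : ∀ i, Continuous fun e => v e i) (m : ℕ) (s : Multiset Y)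
    (h : ∀ e, 0 < e → Hyp (Qf φ (v e) m s) (v e)) : Hyp (Qf φ (v 0) m s) (v 0) := by
  intro u
  have hQ : ∀ i j, Continuous fun e => Qf φ (v e) m s i j := fun i j =>
    psi_continuous φ v hv m _
  have c1 : Continuous fun e => bil (Qf φ (v e) m s) u u * bil (Qf φ (v e) m s) (v e) (v e) := by
    unfold bil; fun_prop
  have c2 : Continuous fun e => bil (Qf φ (v e) m s) u (v e) ^ 2 := by
    unfold bil; fun_prop
  have l1 := (c1.tendsto 0).mono_left (nhdsWithin_le_nhds (s := Set.Ioi 0))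
  have l2 := (c2.tendsto 0).mono_left (nhdsWithin_le_nhds (s := Set.Ioi 0))
  refine le_of_tendsto_of_tendsto l1 l2 ?_
  filter_upwards [self_mem_nhdsWithin] with e he
  exact h e he u

/-- degenerate vectors lie in the kernel -/
theorem hyp_kernel {Y : Type*} [Fintype Y] (A : Y → Y → ℝ)
    (hA : ∀ i j, A i j = A j i) (v : Y → ℝ) (hv : 0 < bil A v v) (hH : Hyp A v)
    (u : Y → ℝ) (hu : bil A u u = 0) (huv : bil A u v = 0) (z : Y → ℝ) : bil A u z = 0 := by
  have hneg : ∀ x, bil A x v = 0 → bil A x x ≤ 0 := by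
    intro x hx
    have := hH x
    rw [hx] at this
    by_contra h
    push Not at h
    nlinarith [mul_pos h hv]
  set z' : Y → ℝ := fun i => z i + -(bil A z v / bil A v v) * v i with hz
  have h1 : bil A z' v = 0 := by rw [hz, bil_add_smul]; field_simp; ring
  have h2 : bil A u z' = bil A u z := by
    rw [bil_symm A hA, hz, bil_add_smul, bil_symm A hA v u, huv, bil_symm A hA z u]; ring
  have h3 : ∀ t : ℝ, 2 * t * bil A u z + t ^ 2 * bil A z' z' ≤ 0 := by
    intro t
    have := hneg (fun i => u i + t * z' i) (by rw [bil_add_smul, huv, h1]; ring)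
    rw [bil_quad A hA, hu, h2] at this
    linarith
  have hq := hneg z' h1
  set p := bil A u z
  set q := bil A z' z'
  by_contra hp
  have hp2 : 0 < p ^ 2 := by positivity
  -- take t = p / (1 - q)
  have hq1 : 0 < 1 - q := by linarith
  have := h3 (p / (1 - q))
  have e : 2 * (p / (1 - q)) * p + (p / (1 - q)) ^ 2 * q
      = p ^ 2 * (2 - q) / (1 - q) ^ 2 := by field_simp; ring
  rw [e] at this
  have : 0 < p ^ 2 * (2 - q) / (1 - q) ^ 2 :=
    div_pos (mul_pos hp2 (by linarith)) (by positivity)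
  linarith

theorem degen_step {Y : Type*} [Fintype Y] [DecidableEq Y] (φ : Multiset Y → ℝ)
    (v : Y → ℝ) (hv : ∀ i, 0 ≤ v i) (m : ℕ) (s : Multiset Y)
    (h0 : ∀ s y, φ s = 0 → φ (y ::ₘ s) = 0)
    (hH : Hyp (Qf φ v (m + 1) s) v) (hpos : 0 < psi φ v (m + 3) s)
    (hHy : ∀ y, Hyp (Qf φ v m (y ::ₘ s)) v)
    (hposy : ∀ y, 0 < v y → φ (y ::ₘ s) ≠ 0 → 0 < psi φ v (m + 2) (y ::ₘ s))
    (u : Y → ℝ) (hu : bil (Qf φ v (m + 1) s) u u = 0) (huv : bil (Qf φ v (m + 1) s) u v = 0)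
    (y : Y) (hy : 0 < v y) :
    bil (Qf φ v m (y ::ₘ s)) u u = 0 ∧ bil (Qf φ v m (y ::ₘ s)) u v = 0 := by
  have hk := hyp_kernel _ (Qf_symm φ v _ s) v (by rw [bil_Qf_vv]; exact hpos) hH u hu huv
  have h2 : ∀ y, bil (Qf φ v m (y ::ₘ s)) u v = 0 := by
    intro y
    rw [bil_Qf_cons]
    have := hk (Pi.single y 1)
    rw [bil_symm _ (Qf_symm φ v _ s), bil_row] at this
    rw [Finset.sum_eq_single y] at this
    · simpa using this
    · intro b _ hb; simp [hb]
    · simp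
  have h3 : ∀ y, v y * bil (Qf φ v m (y ::ₘ s)) u u ≤ 0 := by
    intro y
    rcases (hv y).eq_or_lt with h | h
    · rw [← h, zero_mul]
    apply mul_nonpos_of_nonneg_of_nonpos h.le
    by_cases hz : φ (y ::ₘ s) = 0
    · apply le_of_eq
      refine Finset.sum_eq_zero fun i _ => Finset.sum_eq_zero fun j _ => ?_
      unfold Qf
      rw [psi_zero φ h0 v _ _ (h0 _ _ (h0 _ _ hz)), mul_zero]
    have h4 := hHy y u
    have h5 := hposy y h hz
    rw [h2, bil_Qf_vv] at h4
    by_contra h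
    push Not at h
    nlinarith [mul_pos h h5]
  rw [bil_Qf_succ] at hu
  have h4 := (Finset.sum_eq_zero_iff_of_nonpos (fun y _ => h3 y)).1 hu y (Finset.mem_univ _)
  exact ⟨(mul_eq_zero.1 h4).resolve_left hy.ne', h2 y⟩

/-- the class-sum form -/
def Pf {X Z : Type*} [Fintype X] [DecidableEq Z] (C : Finset X) (c : X → Z) (u : X → ℝ) : ℝ :=
  ∑ q ∈ C.image c, (∑ x ∈ C.filter (fun x => c x = q), u x) ^ 2

theorem Pf_nonneg {X Z : Type*} [Fintype X] [DecidableEq Z] (C : Finset X) (c : X → Z)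
    (u : X → ℝ) : 0 ≤ Pf C c u := Finset.sum_nonneg fun _ _ => sq_nonneg _

theorem Pf_eq {X Z : Type*} [Fintype X] [DecidableEq Z] (C : Finset X) (c : X → Z)
    (u : X → ℝ) : Pf C c u = ∑ x ∈ C, ∑ y ∈ C, if c x = c y then u x * u y else 0 := by
  unfold Pf
  rw [← Finset.sum_fiberwise_of_maps_to (s := C) (t := C.image c) (g := c)
    (fun x hx => Finset.mem_image_of_mem _ hx)]
  refine Finset.sum_congr rfl fun q _ => ?_
  rw [sq, Finset.sum_mul]
  refine Finset.sum_congr rfl fun x hx => ?_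
  rw [Finset.mul_sum, ← Finset.sum_filter]
  refine Finset.sum_congr ?_ fun _ _ => rfl
  ext y
  simp only [Finset.mem_filter] at hx ⊢
  rw [hx.2, eq_comm]

theorem sq_le_Pf {X Z : Type*} [Fintype X] [DecidableEq Z] (C : Finset X) (c : X → Z)
    (u : X → ℝ) : (∑ x ∈ C, u x) ^ 2 ≤ (C.image c).card * Pf C c u := by
  rw [← Finset.sum_fiberwise_of_maps_to (s := C) (t := C.image c) (g := c)
    (fun x hx => Finset.mem_image_of_mem _ hx)]
  exact sq_sum_le_card_mul_sum_sq

theorem base_quad {X Z : Type*} [Fintype X] [DecidableEq X] [DecidableEq Z]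
    (C : Finset X) (c : X → Z) (K N : ℝ) (A : Option X → Option X → ℝ)
    (h00 : A none none = K * (N * (N - 1)))
    (h01 : ∀ x, A none (some x) = if x ∈ C then K * (N - 1) else 0)
    (h10 : ∀ x, A (some x) none = if x ∈ C then K * (N - 1) else 0)
    (h11 : ∀ x y, A (some x) (some y) = if x ∈ C ∧ y ∈ C ∧ c x ≠ c y then K else 0)
    (u : Option X → ℝ) :
    bil A u u = K * (N * (N - 1) * (u none) ^ 2 + 2 * (N - 1) * u none * (∑ x ∈ C, u (some x))
      + (∑ x ∈ C, u (some x)) ^ 2 - Pf C c (fun x => u (some x))) := by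
  have e1 : ∑ x : X, u none * u (some x) * A none (some x)
      = K * (N - 1) * u none * ∑ x ∈ C, u (some x) := by
    simp only [h01, mul_ite, mul_zero]
    rw [← Finset.sum_filter, Finset.mul_sum]
    simp only [Finset.filter_univ_mem]
    exact Finset.sum_congr rfl fun x _ => by ring
  have e2 : ∑ x : X, u (some x) * u none * A (some x) none
      = K * (N - 1) * u none * ∑ x ∈ C, u (some x) := by
    simp only [h10, mul_ite, mul_zero]
    rw [← Finset.sum_filter, Finset.mul_sum]
    simp only [Finset.filter_univ_mem]
    exact Finset.sum_congr rfl fun x _ => by ring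
  have e3 : ∑ x : X, ∑ y : X, u (some x) * u (some y) * A (some x) (some y)
      = K * ((∑ x ∈ C, u (some x)) ^ 2 - Pf C c (fun x => u (some x))) := by
    rw [Pf_eq, sq, Finset.sum_mul_sum, ← Finset.sum_sub_distrib, Finset.mul_sum]
    rw [← Finset.sum_subset (Finset.subset_univ C)]
    · refine Finset.sum_congr rfl fun x hx => ?_
      rw [← Finset.sum_sub_distrib, Finset.mul_sum]
      rw [← Finset.sum_subset (Finset.subset_univ C)]
      · refine Finset.sum_congr rfl fun y hy => ?_
        rw [h11]
        by_cases h : c x = c y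
        · simp [h]
        · simp [h, hx, hy]; ring
      · intro y _ hy
        rw [h11]; simp [hy]
    · intro x _ hx
      refine Finset.sum_eq_zero fun y _ => ?_
      rw [h11]; simp [hx]
  unfold bil
  simp only [Fintype.sum_option, Finset.sum_add_distrib]
  rw [e1, e2, e3, h00]
  ring

theorem base_neg {X Z : Type*} [Fintype X] [DecidableEq Z]
    (C : Finset X) (c : X → Z) (N : ℝ) (hN : 0 < N) (hC : (C.card : ℝ) ≤ N)
    (a : ℝ) (u : X → ℝ) (hL : N * a + ∑ x ∈ C, u x = 0) :
    N * (N - 1) * a ^ 2 + 2 * (N - 1) * a * (∑ x ∈ C, u x)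
      + (∑ x ∈ C, u x) ^ 2 - Pf C c u ≤ 0 := by
  have h1 := sq_le_Pf C c u
  have h2 : ((C.image c).card : ℝ) ≤ N :=
    le_trans (by exact_mod_cast Finset.card_image_le) hC
  have h3 := mul_le_mul_of_nonneg_right h2 (Pf_nonneg C c u)
  set S := ∑ x ∈ C, u x
  set P := Pf C c u
  have hS : S = -(N * a) := by linarith
  have : N * (N * (N - 1) * a ^ 2 + 2 * (N - 1) * a * S + S ^ 2 - P) ≤ 0 := by
    have : N * (N * (N - 1) * a ^ 2 + 2 * (N - 1) * a * S + S ^ 2 - P) = S ^ 2 - N * P := by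
      rw [hS]; ring
    rw [this]; linarith
  by_contra h
  push Not at h
  nlinarith [mul_pos hN h]

theorem base_hyp {X Z : Type*} [Fintype X] [DecidableEq X] [DecidableEq Z]
    (C : Finset X) (c : X → Z) (K N : ℝ) (hK : 0 < K) (hN : 0 < N) (hC : (C.card : ℝ) ≤ N)
    (A : Option X → Option X → ℝ) (hA : ∀ i j, A i j = A j i) (hA0 : ∀ i j, 0 ≤ A i j)
    (h00 : A none none = K * (N * (N - 1)))
    (h01 : ∀ x, A none (some x) = if x ∈ C then K * (N - 1) else 0)
    (h11 : ∀ x y, A (some x) (some y) = if x ∈ C ∧ y ∈ C ∧ c x ≠ c y then K else 0)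
    (v : Option X → ℝ) (hv : ∀ i, 0 < v i) : Hyp A v := by
  apply hyp_of_exists A hA v (bil_nonneg A hA0 v fun i => (hv i).le)
  intro u
  have hLv : 0 < N * v none + ∑ x ∈ C, v (some x) :=
    add_pos_of_pos_of_nonneg (mul_pos hN (hv _)) (Finset.sum_nonneg fun x _ => (hv _).le)
  refine ⟨-((N * u none + ∑ x ∈ C, u (some x)) / (N * v none + ∑ x ∈ C, v (some x))), ?_⟩
  rw [base_quad C c K N A h00 h01 (fun x => by rw [hA, h01]) h11]
  apply mul_nonpos_of_nonneg_of_nonpos hK.le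
  apply base_neg C c N hN hC
  rw [Finset.sum_add_distrib, ← Finset.mul_sum]
  field_simp
  ring

theorem base_eq {X Z : Type*} [Fintype X] [DecidableEq X] [DecidableEq Z]
    (C : Finset X) (c : X → Z) (K N : ℝ) (hK : 0 < K) (hN : 0 < N) (hC : (C.card : ℝ) ≤ N)
    (A : Option X → Option X → ℝ) (hA : ∀ i j, A i j = A j i)
    (h00 : A none none = K * (N * (N - 1)))
    (h01 : ∀ x, A none (some x) = if x ∈ C then K * (N - 1) else 0)
    (h11 : ∀ x y, A (some x) (some y) = if x ∈ C ∧ y ∈ C ∧ c x ≠ c y then K else 0)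
    (v : Option X → ℝ) (hv0 : v none = 0) (hv : 0 < bil A v v)
    (u : Option X → ℝ) (hu1 : u none = 1) (hu : bil A u u = 0) (huv : bil A u v = 0) :
    N ≤ (C.image c).card := by
  have hq := base_quad C c K N A h00 h01 (fun x => by rw [hA, h01]) h11
  have hLv : (∑ x ∈ C, v (some x)) ≠ 0 := by
    intro h
    have := hq v
    rw [h, hv0] at this
    have h2 := mul_nonneg hK.le (Pf_nonneg C c (fun x => v (some x)))
    nlinarith
  set r := -((N * u none + ∑ x ∈ C, u (some x)) / (∑ x ∈ C, v (some x))) with hr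
  have hz := bil_quad A hA u v r
  rw [hu, huv] at hz
  have hle : bil A (fun i => u i + r * v i) (fun i => u i + r * v i) ≤ 0 := by
    rw [hq]
    apply mul_nonpos_of_nonneg_of_nonpos hK.le
    apply base_neg C c N hN hC
    rw [Finset.sum_add_distrib, ← Finset.mul_sum, hv0, hr]
    field_simp
    ring
  have hr0 : r = 0 := by
    by_contra h
    have : 0 < r ^ 2 * bil A v v := mul_pos (by positivity) hv
    linarith
  have hL : ∑ x ∈ C, u (some x) = -N := by
    rw [hr, hu1, neg_eq_zero, div_eq_zero_iff] at hr0
    have := hr0.resolve_right hLv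
    linarith
  have h1 := hq u
  rw [hu, hL, hu1] at h1
  have h2 := (mul_eq_zero.1 h1.symm).resolve_left hK.ne'
  have h3 : Pf C c (fun x => u (some x)) = N := by linarith
  have h4 := sq_le_Pf C c (fun x => u (some x))
  rw [h3, hL] at h4
  by_contra h
  push Not at h
  nlinarith

/-- the matroid weight -/
def mval {X : Type*} [Fintype X] [DecidableEq X] (Indep : Finset X → Prop) (t : Multiset X) : ℝ :=
  if t.Nodup ∧ Indep t.toFinset then ((Fintype.card X - t.card).factorial : ℝ) else 0

/-- the matroid weight with an auxiliary variable -/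
def mphi {X : Type*} [Fintype X] [DecidableEq X] (Indep : Finset X → Prop)
    (s : Multiset (Option X)) : ℝ := mval Indep (s.filterMap id)

theorem mphi_nonneg {X : Type*} [Fintype X] [DecidableEq X] (Indep : Finset X → Prop)
    (s : Multiset (Option X)) : 0 ≤ mphi Indep s := by
  unfold mphi mval; split_ifs <;> positivity

theorem mphi_none {X : Type*} [Fintype X] [DecidableEq X] (Indep : Finset X → Prop)
    (s : Multiset (Option X)) : mphi Indep (none ::ₘ s) = mphi Indep s := by
  unfold mphi; rw [Multiset.filterMap_cons_none _ _ rfl]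

theorem mphi_some {X : Type*} [Fintype X] [DecidableEq X] (Indep : Finset X → Prop)
    (s : Multiset (Option X)) (x : X) :
    mphi Indep (some x ::ₘ s) = mval Indep (x ::ₘ s.filterMap id) := by
  unfold mphi; rw [Multiset.filterMap_cons_some id (some x) s rfl]

theorem mval_ne_zero {X : Type*} [Fintype X] [DecidableEq X] (Indep : Finset X → Prop)
    (t : Multiset X) : mval Indep t ≠ 0 ↔ t.Nodup ∧ Indep t.toFinset := by
  unfold mval
  constructor
  · intro h
    by_contra hc
    rw [if_neg hc] at h
    exact h rfl
  · intro h
    rw [if_pos h]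
    positivity

theorem mphi_zero {X : Type*} [Fintype X] [DecidableEq X] (Indep : Finset X → Prop)
    (h_hered : ∀ S T : Finset X, S ⊆ T → Indep T → Indep S)
    (s : Multiset (Option X)) (y : Option X) (h : mphi Indep s = 0) :
    mphi Indep (y ::ₘ s) = 0 := by
  cases y with
  | none => rw [mphi_none, h]
  | some x =>
    by_contra hc
    rw [mphi_some] at hc
    have h1 := (mval_ne_zero Indep _).1 hc
    apply (mval_ne_zero Indep (s.filterMap id)).2 _ h
    refine ⟨(Multiset.nodup_cons.1 h1.1).2, h_hered _ _ ?_ h1.2⟩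
    rw [Multiset.toFinset_cons]
    exact Finset.subset_insert _ _

theorem card_somes_le {X : Type*} (s : Multiset (Option X)) :
    (s.filterMap id).card ≤ s.card := by
  induction s using Multiset.induction with
  | empty => simp
  | cons a s ih =>
    cases a with
    | none => rw [Multiset.filterMap_cons_none _ _ rfl, Multiset.card_cons]; omega
    | some x =>
      rw [Multiset.filterMap_cons_some id (some x) s rfl, Multiset.card_cons, Multiset.card_cons]
      omega

/-- parallel classes -/
theorem exists_class {X : Type*} [Fintype X] [DecidableEq X] (Indep : Finset X → Prop)
    (h_exch : ∀ S T : Finset X, Indep S → Indep T → S.card < T.card →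
      ∃ x ∈ T, x ∉ S ∧ Indep (insert x S)) (T : Finset X) :
    ∃ c : X → Finset X, ∀ x ∈ mCont Indep T, ∀ y ∈ mCont Indep T,
      (c x ≠ c y ↔ x ≠ y ∧ Indep (insert x (insert y T))) := by
  have hC : ∀ x, x ∈ mCont Indep T ↔ x ∉ T ∧ Indep (insert x T) := by
    intro x; simp [mCont]
  refine ⟨fun x => (mCont Indep T).filter
    (fun z => z = x ∨ ¬ Indep (insert z (insert x T))), ?_⟩
  have trans : ∀ x ∈ mCont Indep T, ∀ y ∈ mCont Indep T, ∀ z ∈ mCont Indep T,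
      (x = y ∨ ¬ Indep (insert x (insert y T))) → (y = z ∨ ¬ Indep (insert y (insert z T))) →
      (x = z ∨ ¬ Indep (insert x (insert z T))) := by
    intro x hx y hy z hz hxy hyz
    by_contra hc
    push Not at hc
    obtain ⟨hxz, hI⟩ := hc
    rw [hC] at hx hy hz
    have hcard : (insert y T).card < (insert x (insert z T)).card := by
      rw [Finset.card_insert_of_notMem hy.1, Finset.card_insert_of_notMem,
        Finset.card_insert_of_notMem hz.1]
      · omega
      · simp [hxz, hx.1]
    obtain ⟨p, hp, hpn, hpI⟩ := h_exch _ _ hy.2 hI hcard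
    simp only [Finset.mem_insert, not_or] at hp hpn
    rcases hp with rfl | rfl | hp
    · rcases hxy with h | h
      · exact hpn.1 h
      · exact h hpI
    · rcases hyz with h | h
      · exact hpn.1 h.symm
      · rw [Finset.insert_comm] at h; exact h hpI
    · exact hpn.2 hp
  have symm : ∀ x y, (x = y ∨ ¬ Indep (insert x (insert y T))) →
      (y = x ∨ ¬ Indep (insert y (insert x T))) := by
    intro x y h
    rw [Finset.insert_comm, eq_comm]; exact h
  intro x hx y hy
  rw [← not_iff_not]
  push Not
  have : (x ≠ y → ¬ Indep (insert x (insert y T))) ↔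
      (x = y ∨ ¬ Indep (insert x (insert y T))) := by tauto
  rw [this]
  constructor
  · intro h
    have h1 : x ∈ (mCont Indep T).filter
        (fun z => z = x ∨ ¬ Indep (insert z (insert x T))) := by simp [hx]
    rw [h] at h1
    exact (Finset.mem_filter.1 h1).2
  · intro h
    ext z
    simp only [Finset.mem_filter]
    refine and_congr_right fun hz => ⟨fun h' => trans z hz x hx y hy h' h,
      fun h' => trans z hz y hy x hx h' (symm _ _ h)⟩

theorem toFinset_card_nodup {X : Type*} [DecidableEq X] {t : Multiset X} (h : t.Nodup) :
    t.toFinset.card = t.card := Multiset.toFinset_card_of_nodup h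

/-- explicit base form -/
theorem base_values {X : Type*} [Fintype X] [DecidableEq X] (Indep : Finset X → Prop)
    (h_hered : ∀ S T : Finset X, S ⊆ T → Indep T → Indep S)
    (v : Option X → ℝ) (s : Multiset (Option X)) (hs : (s.filterMap id).card + 2 ≤ Fintype.card X)
    (hnd : (s.filterMap id).Nodup) (hI : Indep (s.filterMap id).toFinset)
    (c : X → Finset X) (hc : ∀ x ∈ mCont Indep (s.filterMap id).toFinset,
      ∀ y ∈ mCont Indep (s.filterMap id).toFinset,
      (c x ≠ c y ↔ x ≠ y ∧ Indep (insert x (insert y (s.filterMap id).toFinset))))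
    (N : ℕ) (hN : N = Fintype.card X - (s.filterMap id).card) :
    (Qf (mphi Indep) v 0 s none none = ((N - 2).factorial : ℝ) * ((N : ℝ) * ((N : ℝ) - 1))) ∧
    (∀ x, Qf (mphi Indep) v 0 s none (some x) =
      if x ∈ mCont Indep (s.filterMap id).toFinset then
        ((N - 2).factorial : ℝ) * ((N : ℝ) - 1) else 0) ∧
    (∀ x y, Qf (mphi Indep) v 0 s (some x) (some y) =
      if x ∈ mCont Indep (s.filterMap id).toFinset ∧ y ∈ mCont Indep (s.filterMap id).toFinset ∧
        c x ≠ c y then ((N - 2).factorial : ℝ) else 0) := by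
  obtain ⟨M, rfl⟩ : ∃ M, N = M + 2 := ⟨N - 2, by omega⟩
  have hC : ∀ x, x ∈ mCont Indep (s.filterMap id).toFinset ↔ x ∉ (s.filterMap id) ∧
      Indep (insert x (s.filterMap id).toFinset) := by
    intro x; simp [mCont]
  have hm0 : Fintype.card X - (s.filterMap id).card = M + 2 := by omega
  have hm1 : Fintype.card X - ((s.filterMap id).card + 1) = M + 1 := by omega
  have hm2 : Fintype.card X - ((s.filterMap id).card + 1 + 1) = M := by omega
  refine ⟨?_, ?_, ?_⟩
  · simp only [Qf, psi, mphi_none]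
    unfold mphi mval
    rw [if_pos ⟨hnd, hI⟩, hm0, Nat.factorial_succ, Nat.factorial_succ]
    push_cast [Nat.add_sub_cancel]; ring
  · intro x
    simp only [Qf, psi, mphi_none, mphi_some]
    unfold mval
    simp only [Multiset.nodup_cons, Multiset.toFinset_cons, Multiset.card_cons, hm1, hC]
    by_cases h : x ∉ (s.filterMap id) ∧ Indep (insert x (s.filterMap id).toFinset)
    · rw [if_pos ⟨⟨h.1, hnd⟩, h.2⟩, if_pos h, Nat.factorial_succ]
      push_cast [Nat.add_sub_cancel]; ring
    · rw [if_neg (fun h' => h ⟨h'.1.1, h'.2⟩), if_neg h]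
  · intro x y
    simp only [Qf, psi, mphi_some]
    rw [Multiset.filterMap_cons_some id (some y) s rfl]
    unfold mval
    simp only [Multiset.nodup_cons, Multiset.toFinset_cons, Multiset.card_cons, hm2,
      Nat.add_sub_cancel]
    refine if_congr ?_ rfl rfl
    constructor
    · rintro ⟨⟨h1, h2, -⟩, h3⟩
      rw [Multiset.mem_cons, not_or] at h1
      have hx : x ∈ mCont Indep (s.filterMap id).toFinset :=
        (hC x).2 ⟨h1.2, h_hered _ _ (Finset.insert_subset_insert _ (Finset.subset_insert _ _)) h3⟩
      have hy : y ∈ mCont Indep (s.filterMap id).toFinset :=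
        (hC y).2 ⟨h2, h_hered _ _ (Finset.subset_insert _ _) h3⟩
      exact ⟨hx, hy, (hc x hx y hy).2 ⟨h1.1, h3⟩⟩
    · rintro ⟨hx, hy, h⟩
      have h' := (hc x hx y hy).1 h
      refine ⟨⟨?_, ((hC y).1 hy).1, hnd⟩, h'.2⟩
      rw [Multiset.mem_cons, not_or]
      exact ⟨h'.1, ((hC x).1 hx).1⟩

theorem cont_card_le {X : Type*} [Fintype X] [DecidableEq X] (Indep : Finset X → Prop)
    (T : Finset X) : (mCont Indep T).card ≤ Fintype.card X - T.card := by
  rw [← Finset.card_compl]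
  apply Finset.card_le_card
  intro x hx
  simp only [mCont, Finset.mem_filter] at hx
  simpa using hx.2.1

theorem mat_base_hyp {X : Type*} [Fintype X] [DecidableEq X] (Indep : Finset X → Prop)
    (h_hered : ∀ S T : Finset X, S ⊆ T → Indep T → Indep S)
    (h_exch : ∀ S T : Finset X, Indep S → Indep T → S.card < T.card →
      ∃ x ∈ T, x ∉ S ∧ Indep (insert x S))
    (v : Option X → ℝ) (hv : ∀ i, 0 < v i) (s : Multiset (Option X))
    (hs : s.card + 2 ≤ Fintype.card X) : Hyp (Qf (mphi Indep) v 0 s) v := by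
  by_cases h : mphi Indep s = 0
  · intro u
    have : bil (Qf (mphi Indep) v 0 s) u u = 0 := by
      refine Finset.sum_eq_zero fun i _ => Finset.sum_eq_zero fun j _ => ?_
      unfold Qf
      rw [psi, mphi_zero Indep h_hered _ _ (mphi_zero Indep h_hered _ _ h), mul_zero]
    rw [this, zero_mul]; positivity
  have h1 := (mval_ne_zero Indep _).1 h
  have hs' := card_somes_le s
  obtain ⟨c, hc⟩ := exists_class Indep h_exch (s.filterMap id).toFinset
  obtain ⟨b0, b1, b2⟩ := base_values Indep h_hered v s (by omega) h1.1 h1.2 c hc _ rfl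
  refine base_hyp _ c _ _ (by positivity) ?_ ?_ _ (Qf_symm _ v 0 s)
    (fun i j => psi_nonneg _ (mphi_nonneg Indep) v (fun i => (hv i).le) _ _) b0 b1 b2 v hv
  · exact_mod_cast (by omega : 0 < Fintype.card X - (s.filterMap id).card)
  · have := cont_card_le Indep (s.filterMap id).toFinset
    rw [toFinset_card_nodup h1.1] at this
    exact_mod_cast this

/-- the direction `(e,1,…,1)` -/
def dirv (X : Type*) (e : ℝ) : Option X → ℝ
  | none => e
  | some _ => 1

theorem mat_hyp {X : Type*} [Fintype X] [DecidableEq X] (Indep : Finset X → Prop)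
    (h_hered : ∀ S T : Finset X, S ⊆ T → Indep T → Indep S)
    (h_exch : ∀ S T : Finset X, Indep S → Indep T → S.card < T.card →
      ∃ x ∈ T, x ∉ S ∧ Indep (insert x S))
    (m : ℕ) (s : Multiset (Option X))
    (hs : s.card + m + 2 ≤ Fintype.card X) :
    Hyp (Qf (mphi Indep) (dirv X 0) m s) (dirv X 0) := by
  apply hyp_limit
  · intro i
    cases i with
    | none => exact continuous_id
    | some x => exact continuous_const
  · intro e he
    have hv : ∀ i, 0 < dirv X e i := by
      intro i
      cases i with
      | none => exact he
      | some x => exact one_pos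
    exact hyp_all _ (mphi_nonneg Indep) (mphi_zero Indep h_hered) none (mphi_none Indep)
      _ hv _ (fun s hs => mat_base_hyp Indep h_hered h_exch _ hv s hs) m s hs

/-- count of independent supersets -/
def supCount {X : Type*} [Fintype X] [DecidableEq X] (Indep : Finset X → Prop) (T : Finset X)
    (k : ℕ) : ℕ :=
  (Finset.univ.filter (fun S : Finset X => T ⊆ S ∧ Indep S ∧ S.card = k)).card

theorem supCount_sum {X : Type*} [Fintype X] [DecidableEq X] (Indep : Finset X → Prop)
    (T : Finset X) (m : ℕ) :
    ∑ x : X, (if x ∉ T then supCount Indep (insert x T) (T.card + m + 1) else 0)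
      = (m + 1) * supCount Indep T (T.card + m + 1) := by
  have h1 : ∀ x : X, (if x ∉ T then supCount Indep (insert x T) (T.card + m + 1) else 0)
      = ∑ S ∈ Finset.univ.filter
          (fun S : Finset X => T ⊆ S ∧ Indep S ∧ S.card = T.card + m + 1),
          if x ∈ S \ T then 1 else 0 := by
    intro x
    by_cases hx : x ∈ T
    · simp [hx]
    · rw [if_pos hx, ← Finset.sum_filter, ← Finset.card_eq_sum_ones, supCount]
      congr 1
      ext S
      simp only [Finset.mem_filter, Finset.mem_univ, true_and, Finset.insert_subset_iff,
        Finset.mem_sdiff]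
      tauto
  simp only [h1]
  rw [Finset.sum_comm, supCount, mul_comm, ← smul_eq_mul, ← Finset.sum_const]
  refine Finset.sum_congr rfl fun S hS => ?_
  simp only [Finset.mem_filter, Finset.mem_univ, true_and] at hS
  rw [← Finset.sum_filter, ← Finset.card_eq_sum_ones, Finset.filter_univ_mem,
    Finset.card_sdiff_of_subset hS.1]
  omega

theorem psi_count {X : Type*} [Fintype X] [DecidableEq X] (Indep : Finset X → Prop)
    (m : ℕ) : ∀ s : Multiset (Option X), psi (mphi Indep) (dirv X 0) m s =
      if (s.filterMap id).Nodup then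
        (m.factorial : ℝ) * ((Fintype.card X - ((s.filterMap id).card + m)).factorial : ℝ) *
          (supCount Indep (s.filterMap id).toFinset ((s.filterMap id).card + m) : ℝ)
      else 0 := by
  induction m with
  | zero =>
    intro s
    rw [psi]
    unfold mphi mval
    by_cases h : (s.filterMap id).Nodup
    · rw [if_pos h]
      have : supCount Indep (s.filterMap id).toFinset ((s.filterMap id).card + 0)
          = if Indep (s.filterMap id).toFinset then 1 else 0 := by
        unfold supCount
        have e : ∀ S : Finset X, ((s.filterMap id).toFinset ⊆ S ∧ Indep S ∧
            S.card = (s.filterMap id).card + 0) ↔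
            (S = (s.filterMap id).toFinset ∧ Indep (s.filterMap id).toFinset) := by
          intro S
          rw [add_zero, ← toFinset_card_nodup h]
          constructor
          · rintro ⟨h1, h2, h3⟩
            have := Finset.eq_of_subset_of_card_le h1 h3.le
            rw [this]; exact ⟨rfl, h2⟩
          · rintro ⟨rfl, h2⟩; exact ⟨subset_rfl, h2, rfl⟩
        simp only [e]
        by_cases hI : Indep (s.filterMap id).toFinset
        · simp [hI, Finset.filter_eq']
        · simp [hI]
      rw [this]
      by_cases hI : Indep (s.filterMap id).toFinset
      · simp [hI, h]
      · simp [hI]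
    · simp [h]
  | succ m ih =>
    intro s
    rw [psi, Fintype.sum_option]
    simp only [dirv, zero_mul, zero_add, one_mul]
    simp only [ih]
    have e : ∀ x : X, Multiset.filterMap id (some x ::ₘ s) = x ::ₘ s.filterMap id :=
      fun x => Multiset.filterMap_cons_some id (some x) s rfl
    simp only [e, Multiset.nodup_cons, Multiset.card_cons, Multiset.toFinset_cons]
    set t := s.filterMap id with ht
    by_cases h : t.Nodup
    · rw [if_pos h]
      have key := supCount_sum Indep t.toFinset m
      rw [toFinset_card_nodup h] at key
      have key' : ∑ x : X, (if x ∉ t then (supCount Indep (insert x t.toFinset) (t.card + m + 1) : ℝ)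
          else 0) = (m + 1) * supCount Indep t.toFinset (t.card + m + 1) := by
        have key2 := congrArg (Nat.cast : ℕ → ℝ) key
        push_cast at key2
        rw [← key2]
        refine Finset.sum_congr rfl fun x _ => ?_
        simp only [Multiset.mem_toFinset]
      rw [← add_assoc, Nat.factorial_succ]
      push_cast
      rw [show ((m : ℝ) + 1) * (m.factorial : ℝ) *
          ((Fintype.card X - (t.card + m + 1)).factorial : ℝ) *
          (supCount Indep t.toFinset (t.card + m + 1) : ℝ) =
          (m.factorial : ℝ) * ((Fintype.card X - (t.card + m + 1)).factorial : ℝ) *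
          (((m : ℝ) + 1) * supCount Indep t.toFinset (t.card + m + 1)) by ring, ← key',
        Finset.mul_sum]
      refine Finset.sum_congr rfl fun x _ => ?_
      simp only [h, and_true]
      rw [add_right_comm t.card 1 m]
      split_ifs
      · ring
      · ring
    · simp [h]

theorem extend_indep {X : Type*} [Fintype X] [DecidableEq X] (Indep : Finset X → Prop)
    (h_exch : ∀ S T : Finset X, Indep S → Indep T → S.card < T.card →
      ∃ x ∈ T, x ∉ S ∧ Indep (insert x S)) (R : Finset X) (hR : Indep R) (m : ℕ) :
    ∀ T, Indep T → T.card + m ≤ R.card → ∃ S, T ⊆ S ∧ Indep S ∧ S.card = T.card + m := by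
  induction m with
  | zero => exact fun T hT _ => ⟨T, subset_rfl, hT, rfl⟩
  | succ m ih =>
    intro T hT h
    obtain ⟨x, -, hx, hxI⟩ := h_exch T R hT hR (by omega)
    have hc := Finset.card_insert_of_notMem hx
    obtain ⟨S, h1, h2, h3⟩ := ih _ hxI (by omega)
    exact ⟨S, (Finset.subset_insert _ _).trans h1, h2, by omega⟩

theorem psi_pos_mat {X : Type*} [Fintype X] [DecidableEq X] (Indep : Finset X → Prop)
    (h_exch : ∀ S T : Finset X, Indep S → Indep T → S.card < T.card →
      ∃ x ∈ T, x ∉ S ∧ Indep (insert x S)) (R : Finset X) (hR : Indep R) (m : ℕ)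
    (s : Multiset (Option X)) (hs : mphi Indep s ≠ 0) (hm : s.card + m ≤ R.card) :
    0 < psi (mphi Indep) (dirv X 0) m s := by
  have h1 := (mval_ne_zero Indep _).1 hs
  have hc := toFinset_card_nodup h1.1
  have hs' := card_somes_le s
  rw [psi_count, if_pos h1.1]
  obtain ⟨S, hS⟩ := extend_indep Indep h_exch R hR m _ h1.2 (by omega)
  rw [hc] at hS
  have : 0 < supCount Indep (s.filterMap id).toFinset ((s.filterMap id).card + m) :=
    Finset.card_pos.2 ⟨S, by simpa using hS⟩
  positivity

theorem somes_map {X : Type*} (t : Multiset X) : (t.map some).filterMap id = t := by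
  rw [Multiset.filterMap_map]
  exact Multiset.filterMap_some t

theorem mphi_map_ne {X : Type*} [Fintype X] [DecidableEq X] (Indep : Finset X → Prop)
    (T : Finset X) : mphi Indep (T.val.map some) ≠ 0 ↔ Indep T := by
  unfold mphi
  rw [somes_map, mval_ne_zero]
  simp [T.nodup]

theorem degen_all {X : Type*} [Fintype X] [DecidableEq X] (Indep : Finset X → Prop)
    (h_hered : ∀ S T : Finset X, S ⊆ T → Indep T → Indep S)
    (h_exch : ∀ S T : Finset X, Indep S → Indep T → S.card < T.card →
      ∃ x ∈ T, x ∉ S ∧ Indep (insert x S)) (R : Finset X) (hR : Indep R) (K : ℕ)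
    (hK : K + 2 ≤ R.card) (u : Option X → ℝ)
    (hu : bil (Qf (mphi Indep) (dirv X 0) K 0) u u = 0)
    (huv : bil (Qf (mphi Indep) (dirv X 0) K 0) u (dirv X 0) = 0) (T : Finset X) :
    ∀ m, Indep T → T.card + m = K →
      bil (Qf (mphi Indep) (dirv X 0) m (T.val.map some)) u u = 0 ∧
      bil (Qf (mphi Indep) (dirv X 0) m (T.val.map some)) u (dirv X 0) = 0 := by
  have hRX : R.card ≤ Fintype.card X := Finset.card_le_univ R
  induction T using Finset.induction_on with
  | empty =>
    intro m _ hm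
    simp only [Finset.card_empty, zero_add] at hm
    subst hm
    simpa using ⟨hu, huv⟩
  | insert x T hx ih =>
    intro m hI hm
    rw [Finset.card_insert_of_notMem hx] at hm
    have hT := h_hered _ _ (Finset.subset_insert x T) hI
    obtain ⟨h1, h2⟩ := ih (m + 1) hT (by omega)
    have hcard : (T.val.map some).card = T.card := by simp
    have hcons : ((insert x T).val.map some) = some x ::ₘ T.val.map some := by
      rw [Finset.insert_val_of_notMem hx, Multiset.map_cons]
    rw [hcons]
    refine degen_step (mphi Indep) (dirv X 0) ?_ m (T.val.map some) (mphi_zero Indep h_hered)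
      ?_ ?_ ?_ ?_ u h1 h2 (some x) one_pos
    · intro i
      cases i with
      | none => exact le_rfl
      | some x => exact zero_le_one
    · exact mat_hyp Indep h_hered h_exch _ _ (by omega)
    · exact psi_pos_mat Indep h_exch R hR _ _ ((mphi_map_ne Indep T).2 hT) (by omega)
    · intro y
      exact mat_hyp Indep h_hered h_exch _ _ (by rw [Multiset.card_cons]; omega)
    · intro y _ hy
      exact psi_pos_mat Indep h_exch R hR _ _ hy (by rw [Multiset.card_cons]; omega)

theorem degen_base {X : Type*} [Fintype X] [DecidableEq X] (Indep : Finset X → Prop)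
    (h_hered : ∀ S T : Finset X, S ⊆ T → Indep T → Indep S)
    (h_exch : ∀ S T : Finset X, Indep S → Indep T → S.card < T.card →
      ∃ x ∈ T, x ∉ S ∧ Indep (insert x S)) (R : Finset X) (hR : Indep R)
    (T : Finset X) (hT : Indep T) (hTR : T.card + 2 ≤ R.card)
    (u : Option X → ℝ) (hu1 : u none = 1)
    (hu : bil (Qf (mphi Indep) (dirv X 0) 0 (T.val.map some)) u u = 0)
    (huv : bil (Qf (mphi Indep) (dirv X 0) 0 (T.val.map some)) u (dirv X 0) = 0)
    (x y : X) (hx : x ∉ T) (hy : y ∉ T) (hxy : x ≠ y) : Indep (insert x (insert y T)) := by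
  have hRX : R.card ≤ Fintype.card X := Finset.card_le_univ R
  have hsm : (T.val.map some).filterMap id = T.val := somes_map T.val
  have hcard : ((T.val.map some).filterMap id).card = T.card := by rw [hsm]; rfl
  have htf : ((T.val.map some).filterMap id).toFinset = T := by rw [hsm]; simp
  obtain ⟨c, hc⟩ := exists_class Indep h_exch T
  obtain ⟨b0, b1, b2⟩ := base_values Indep h_hered (dirv X 0) (T.val.map some) (by omega)
    (by rw [hsm]; exact T.nodup) (by rw [htf]; exact hT) c (by rw [htf]; exact hc) _ rfl
  rw [htf] at b1 b2
  rw [hcard] at b0 b1 b2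
  have hle := cont_card_le Indep T
  have key := base_eq (mCont Indep T) c _ _ (by positivity)
    (by exact_mod_cast (by omega : 0 < Fintype.card X - T.card))
    (by exact_mod_cast hle) _ (Qf_symm _ _ 0 _) b0 b1 b2 (dirv X 0) rfl
    (by
      rw [bil_Qf_vv]
      exact psi_pos_mat Indep h_exch R hR _ _ ((mphi_map_ne Indep T).2 hT) (by simpa using hTR))
    u hu1 hu huv
  have key' : Fintype.card X - T.card ≤ ((mCont Indep T).image c).card := by exact_mod_cast key
  have hci : ((mCont Indep T).image c).card ≤ (mCont Indep T).card := Finset.card_image_le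
  have hinj : Set.InjOn c (mCont Indep T) := Finset.card_image_iff.1 (by omega)
  have hCeq : mCont Indep T = Tᶜ := by
    apply Finset.eq_of_subset_of_card_le
    · intro z hz
      simp only [mCont, Finset.mem_filter] at hz
      simpa using hz.2.1
    · rw [Finset.card_compl]; omega
  have hxC : x ∈ mCont Indep T := by rw [hCeq]; simpa using hx
  have hyC : y ∈ mCont Indep T := by rw [hCeq]; simpa using hy
  exact ((hc x hxC y hyC).1 (fun h => hxy (hinj hxC hyC h))).2

theorem all_of_swap {X : Type*} [Fintype X] [DecidableEq X] (Indep : Finset X → Prop)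
    (h_hered : ∀ S T : Finset X, S ⊆ T → Indep T → Indep S) (K : ℕ)
    (hX : K + 2 ≤ Fintype.card X)
    (h : ∀ T : Finset X, Indep T → T.card = K → ∀ x y, x ∉ T → y ∉ T → x ≠ y →
      Indep (insert x (insert y T))) (S : Finset X) (hS : S.card = K) (m : ℕ) :
    ∀ T : Finset X, Indep T → T.card = K → (S \ T).card = m → Indep S := by
  induction m with
  | zero =>
    intro T hT hc h0
    have : S ⊆ T := Finset.sdiff_eq_empty_iff_subset.1 (Finset.card_eq_zero.1 h0)
    exact h_hered _ _ this hT
  | succ m ih =>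
    intro T hT hc h0
    obtain ⟨x, hx⟩ : (S \ T).Nonempty := Finset.card_pos.1 (by omega)
    obtain ⟨y, hy⟩ : (T \ S).Nonempty := by
      apply Finset.card_pos.1
      rw [Finset.card_sdiff_comm (hc.trans hS.symm)]; omega
    rw [Finset.mem_sdiff] at hx hy
    obtain ⟨z, hz⟩ : ((insert x T)ᶜ).Nonempty := by
      apply Finset.card_pos.1
      rw [Finset.card_compl, Finset.card_insert_of_notMem hx.2]; omega
    rw [Finset.mem_compl, Finset.mem_insert, not_or] at hz
    have h1 := h T hT hc x z hx.2 hz.2 (Ne.symm hz.1)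
    have hxy : x ≠ y := fun e => hx.2 (e ▸ hy.1)
    refine ih (insert x (T.erase y)) (h_hered _ _ ?_ h1) ?_ ?_
    · apply Finset.insert_subset_insert
      exact (Finset.erase_subset _ _).trans (Finset.subset_insert _ _)
    · rw [Finset.card_insert_of_notMem (by simp [hx.2]), Finset.card_erase_of_mem hy.1]
      have := Finset.card_pos.2 ⟨y, hy.1⟩
      omega
    · have : S \ insert x (T.erase y) = (S \ T).erase x := by
        ext w
        simp only [Finset.mem_sdiff, Finset.mem_insert, Finset.mem_erase, not_or, not_and]
        constructor
        · rintro ⟨a, b, d⟩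
          exact ⟨b, a, d (fun e => hy.2 (e ▸ a))⟩
        · rintro ⟨a, b, d⟩
          exact ⟨b, a, fun _ => d⟩
      rw [this, Finset.card_erase_of_mem (Finset.mem_sdiff.2 hx)]; omega

theorem numIndep_choose {X : Type*} [Fintype X] [DecidableEq X] (Indep : Finset X → Prop) (k : ℕ)
    (h : ∀ S : Finset X, S.card = k → Indep S) :
    numIndep Indep k = (Fintype.card X).choose k := by
  unfold numIndep
  rw [← Finset.card_univ, ← Finset.card_powersetCard]
  congr 1
  ext S
  simp only [Finset.mem_filter, Finset.mem_univ, true_and, Finset.mem_powersetCard,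
    Finset.subset_univ]
  exact ⟨fun h => h.2, fun h' => ⟨h S h', h'⟩⟩

theorem psi_numIndep {X : Type*} [Fintype X] [DecidableEq X] (Indep : Finset X → Prop) (m : ℕ)
    (s : Multiset (Option X)) (hs : s.filterMap id = 0) :
    psi (mphi Indep) (dirv X 0) m s =
      (m.factorial : ℝ) * ((Fintype.card X - m).factorial : ℝ) * (numIndep Indep m : ℝ) := by
  rw [psi_count, hs, if_pos Multiset.nodup_zero]
  simp only [Multiset.card_zero, zero_add, Multiset.toFinset_zero]
  congr 2
  unfold supCount numIndep
  congr 1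
  ext S
  simp

/-- **Equality conditions for log-concavity of matroids.** Equality holds in the
ultra-log-concavity inequality if and only if every `(k+1)`-subset of the ground set is
independent (i.e. `girth(M) > k+1`). -/
theorem matroid_equality
    (Indep : Finset X → Prop)
    (h_ne : ∃ S : Finset X, Indep S)
    (h_hered : ∀ S T : Finset X, S ⊆ T → Indep T → Indep S)
    (h_exch : ∀ S T : Finset X, Indep S → Indep T → S.card < T.card →
      ∃ x ∈ T, x ∉ S ∧ Indep (insert x S))
    (k : ℕ) (hk1 : 1 ≤ k) (hk2 : k < matroidRk Indep) :
    (numIndep Indep k : ℝ) ^ 2 =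
        ((1 : ℝ) + 1 / (k : ℝ)) * (1 + 1 / ((Fintype.card X : ℝ) - (k : ℝ))) *
          (numIndep Indep (k - 1) : ℝ) * (numIndep Indep (k + 1) : ℝ) ↔
      ∀ S : Finset X, S.card = k + 1 → Indep S := by
  have hR : ∃ R : Finset X, Indep R ∧ k + 1 ≤ R.card := by
    unfold matroidRk at hk2
    obtain ⟨R, -, hR⟩ := (Finset.lt_sup_iff).1 hk2
    by_cases h : Indep R
    · rw [if_pos h] at hR; exact ⟨R, h, hR⟩
    · rw [if_neg h] at hR; omega
  obtain ⟨R, hR, hRk⟩ := hR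
  have hRX : R.card ≤ Fintype.card X := Finset.card_le_univ R
  obtain ⟨K, rfl⟩ : ∃ K, k = K + 1 := ⟨k - 1, by omega⟩
  obtain ⟨d, hd⟩ : ∃ d, Fintype.card X = K + 2 + d := ⟨Fintype.card X - (K + 2), by omega⟩
  rw [Nat.add_sub_cancel]
  have hcast : (Fintype.card X : ℝ) - ((K + 1 : ℕ) : ℝ) = (d : ℝ) + 1 := by
    rw [hd]; push_cast; ring
  rw [hcast]
  constructor
  · intro heq
    -- the three quantities
    have hw1 : ∀ z : Option X → ℝ, bil (Qf (mphi Indep) (dirv X 0) K 0) (Pi.single none 1) z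
        = ∑ j, Qf (mphi Indep) (dirv X 0) K 0 none j * z j := by
      intro z
      rw [bil_row, Finset.sum_eq_single none]
      · simp
      · intro b _ hb; simp [hb]
      · simp
    have ha : bil (Qf (mphi Indep) (dirv X 0) K 0) (Pi.single none 1) (Pi.single none 1)
        = (K.factorial : ℝ) * ((d + 2).factorial : ℝ) * (numIndep Indep K : ℝ) := by
      rw [hw1, Finset.sum_eq_single none]
      · rw [Pi.single_eq_same, mul_one, Qf, psi_numIndep _ _ _ (by rfl),
          show Fintype.card X - K = d + 2 by omega]
      · intro b _ hb; simp [hb]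
      · simp
    have hb : bil (Qf (mphi Indep) (dirv X 0) K 0) (Pi.single none 1) (dirv X 0)
        = ((K + 1).factorial : ℝ) * ((d + 1).factorial : ℝ) * (numIndep Indep (K + 1) : ℝ) := by
      rw [hw1, row_Qf, psi_numIndep _ _ _ (by rfl),
          show Fintype.card X - (K + 1) = d + 1 by omega]
    have hc : bil (Qf (mphi Indep) (dirv X 0) K 0) (dirv X 0) (dirv X 0)
        = ((K + 2).factorial : ℝ) * (d.factorial : ℝ) * (numIndep Indep (K + 2) : ℝ) := by
      rw [bil_Qf_vv, psi_numIndep _ _ _ (by rfl),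
          show Fintype.card X - (K + 2) = d by omega]
    have hI0 : Indep ∅ := h_hered _ _ (Finset.empty_subset R) hR
    have hcpos : 0 < bil (Qf (mphi Indep) (dirv X 0) K 0) (dirv X 0) (dirv X 0) := by
      rw [bil_Qf_vv]
      refine psi_pos_mat Indep h_exch R hR _ _ ?_ (by rw [Multiset.card_zero]; omega)
      have := (mphi_map_ne Indep ∅).2 hI0
      simpa using this
    have hdisc : bil (Qf (mphi Indep) (dirv X 0) K 0) (Pi.single none 1) (dirv X 0) ^ 2
        = bil (Qf (mphi Indep) (dirv X 0) K 0) (Pi.single none 1) (Pi.single none 1) *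
          bil (Qf (mphi Indep) (dirv X 0) K 0) (dirv X 0) (dirv X 0) := by
      rw [ha, hb, hc]
      simp only [mul_pow, heq, Nat.factorial_succ]
      push_cast
      have : (K : ℝ) + 1 ≠ 0 := by positivity
      have : (d : ℝ) + 1 ≠ 0 := by positivity
      field_simp
    set Q := Qf (mphi Indep) (dirv X 0) K 0 with hQ
    have hQs : ∀ i j, Q i j = Q j i := Qf_symm _ _ _ _
    set a := bil Q (Pi.single none 1) (Pi.single none 1)
    set b := bil Q (Pi.single none 1) (dirv X 0)
    set c := bil Q (dirv X 0) (dirv X 0)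
    let u : Option X → ℝ := fun i => (Pi.single none 1 : Option X → ℝ) i + -(b / c) * dirv X 0 i
    have hu : bil Q u u = 0 := by
      change bil Q (fun i => (Pi.single none 1 : Option X → ℝ) i + -(b / c) * dirv X 0 i)
        (fun i => (Pi.single none 1 : Option X → ℝ) i + -(b / c) * dirv X 0 i) = 0
      rw [bil_quad Q hQs]
      change a + 2 * -(b / c) * b + (-(b / c)) ^ 2 * c = 0
      field_simp
      linarith
    have huv : bil Q u (dirv X 0) = 0 := by
      change bil Q (fun i => (Pi.single none 1 : Option X → ℝ) i + -(b / c) * dirv X 0 i) _ = 0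
      rw [bil_add_smul]
      change b + -(b / c) * c = 0
      field_simp
      ring
    have hu1 : u none = 1 := by simp [u, dirv]
    have hswap : ∀ T : Finset X, Indep T → T.card = K → ∀ x y, x ∉ T → y ∉ T → x ≠ y →
        Indep (insert x (insert y T)) := by
      intro T hT hTK x y hx hy hxy
      obtain ⟨h1, h2⟩ := degen_all Indep h_hered h_exch R hR K (by omega) u hu huv T 0 hT
        (by omega)
      exact degen_base Indep h_hered h_exch R hR T hT (by omega) u hu1 h1 h2 x y hx hy hxy
    intro S hS
    obtain ⟨T0, -, hT0, hT0c⟩ := extend_indep Indep h_exch R hR K ∅ hI0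
      (by rw [Finset.card_empty]; omega)
    rw [Finset.card_empty, zero_add] at hT0c
    obtain ⟨x, hx⟩ : S.Nonempty := Finset.card_pos.1 (by omega)
    have hc1 := Finset.card_erase_of_mem hx
    obtain ⟨y, hy⟩ : (S.erase x).Nonempty := Finset.card_pos.1 (by omega)
    have hc2 := Finset.card_erase_of_mem hy
    have hT := all_of_swap Indep h_hered K (by omega) hswap ((S.erase x).erase y) (by omega) _
      T0 hT0 hT0c rfl
    have := hswap _ hT (by omega) x y (by simp) (by simp) (Finset.ne_of_mem_erase hy).symm
    rwa [Finset.insert_erase hy, Finset.insert_erase hx] at this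
  · intro hall
    have hsub : ∀ j, j ≤ K + 2 → ∀ S : Finset X, S.card = j → Indep S := by
      intro j hj S hS
      obtain ⟨S', h1, -, h2⟩ := Finset.exists_subsuperset_card_eq (Finset.subset_univ S)
        (n := K + 2) (by omega) (by rw [Finset.card_univ]; omega)
      exact h_hered _ _ h1 (hall S' h2)
    rw [numIndep_choose Indep _ (hsub (K + 1) (by omega)),
      numIndep_choose Indep _ (hsub K (by omega)),
      numIndep_choose Indep _ (hsub (K + 1 + 1) (by omega))]
    have e1 := Nat.choose_succ_right_eq (Fintype.card X) K
    have e2 := Nat.choose_succ_right_eq (Fintype.card X) (K + 1)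
    rw [show Fintype.card X - K = d + 2 by omega] at e1
    rw [show Fintype.card X - (K + 1) = d + 1 by omega] at e2
    have f1 := congrArg (Nat.cast : ℕ → ℝ) e1
    have f2 := congrArg (Nat.cast : ℕ → ℝ) e2
    push_cast at f1 f2 ⊢
    have p1 : (K : ℝ) + 1 ≠ 0 := by positivity
    have p2 : (d : ℝ) + 1 ≠ 0 := by positivity
    field_simp
    set A := ((Fintype.card X).choose K : ℝ)
    set B := ((Fintype.card X).choose (K + 1) : ℝ)
    set C := ((Fintype.card X).choose (K + 1 + 1) : ℝ)
    linear_combination (B * ((d : ℝ) + 1)) * f1 - (A * ((d : ℝ) + 2)) * f2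
end
end
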